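/- Let k ≥ 2 and j ∈ {1,…,k−1}. With high probability, there exist three triples (K_ℓ,C_ℓ,J_ℓ), ℓ = 1,2,3, such that for every p ∈ [p_{j−1}^−, p_{M_j}) there is some ℓ for which (K_ℓ,C_ℓ,J_ℓ) forms a copy of M_j in G_p. In particular, with high probability H^j(G_p;F_2) ≠ 0 for all p ∈ [p_{j−1}^−, p_{M_j}) simultaneously. -/

import Mathlib

open MeasureTheory Filter

attribute [local instance] Classical.propDecidable

namespace RSC

variable {V : Type*}

/-- `A` is an `i`-dimensional simplex of the complex `G`. -/
def IsSimplex (G : Set (Finset V)) (i : ℕ) (A : Finset V) : Prop :=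
  A ∈ G ∧ A.card = i + 1

/-- A `k`-dimensional simplicial complex on vertex set `V`. -/
structure IsKComplex (G : Set (Finset V)) (k : ℕ) : Prop where
  down : ∀ A ∈ G, ∀ B, B ⊆ A → B.Nonempty → B ∈ G
  singletons : ∀ v : V, ({v} : Finset V) ∈ G
  dim : ∀ A ∈ G, A.card ≤ k + 1

/-- `i`-cochains with `F₂`-coefficients. -/
abbrev Cochain (G : Set (Finset V)) (i : ℕ) : Type _ :=
  {A : Finset V // IsSimplex G i A} → ZMod 2

/-- The coboundary map `δ^i : C^i(G) → C^{i+1}(G)`. -/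
noncomputable def coboundary (G : Set (Finset V)) (i : ℕ) :
    Cochain G i →ₗ[ZMod 2] Cochain G (i + 1) where
  toFun f := fun σ => ∑ τ ∈ Finset.powersetCard (i + 1) (σ : Finset V),
      if h : IsSimplex G i τ then f ⟨τ, h⟩ else 0
  map_add' f g := by
    funext σ
    simp only [Pi.add_apply, ← Finset.sum_add_distrib]
    refine Finset.sum_congr rfl fun τ _ => ?_
    by_cases h : IsSimplex G i τ <;> simp [h]
  map_smul' c f := by
    funext σ
    simp only [Pi.smul_apply, RingHom.id_apply, Finset.smul_sum]
    refine Finset.sum_congr rfl fun τ _ => ?_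
    by_cases h : IsSimplex G i τ <;> simp [h]

/-- The submodule of `i`-cocycles. -/
noncomputable def cocycles (G : Set (Finset V)) (i : ℕ) : Submodule (ZMod 2) (Cochain G i) :=
  LinearMap.ker (coboundary G i)

/-- The submodule of `i`-coboundaries (`δ^{-1}` is the zero map). -/
noncomputable def coboundaries (G : Set (Finset V)) : (i : ℕ) → Submodule (ZMod 2) (Cochain G i)
  | 0 => ⊥
  | (i + 1) => LinearMap.range (coboundary G i)

/-- The `i`-th cohomology group `H^i(G;F₂) = ker δ^i / im δ^{i-1}`. -/
noncomputable abbrev cohomology (G : Set (Finset V)) (i : ℕ) :=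
  (cocycles G i) ⧸ ((coboundaries G i).comap (cocycles G i).subtype)

/-- `F₂`-cohomological `j`-connectedness: `H^0 ≅ F₂` and `H^i = 0` for `1 ≤ i ≤ j`. -/
def CohomConnected (G : Set (Finset V)) (j : ℕ) : Prop :=
  Nonempty (cohomology G 0 ≃ₗ[ZMod 2] ZMod 2) ∧
    ∀ i, 1 ≤ i → i ≤ j → Subsingleton (cohomology G i)

/-- The `j`-flower in `K` with centre `C`: the set of petals `C ∪ {w}`, `w ∈ K \ C`. -/
def Flower [DecidableEq V] (K C : Finset V) : Set (Finset V) :=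
  {P | ∃ w ∈ K \ C, P = insert w C}

/-- A copy of `M_j^-`: a `k`-simplex `K` together with a `(j-1)`-simplex `C ⊆ K` such that
each petal of the flower `F(K,C)` is contained in no `k`-simplex other than `K`. -/
def IsMjMinus [DecidableEq V] (G : Set (Finset V)) (k j : ℕ) (K C : Finset V) : Prop :=
  IsSimplex G k K ∧ C ∈ G ∧ C.card = j ∧ C ⊆ K ∧
    ∀ P ∈ Flower K C, ∀ K', IsSimplex G k K' → P ⊆ K' → K' = K

/-- A `j`-cycle: every `(j-1)`-simplex lies in an even number of members of `J`. -/
def IsCycle (G : Set (Finset V)) (j : ℕ) (J : Finset (Finset V)) : Prop :=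
  (∀ σ ∈ J, IsSimplex G j σ) ∧
    ∀ τ : Finset V, τ.card = j → Even (J.filter (fun σ => τ ⊆ σ)).card

/-- A copy of `M_j`. -/
def IsMj [DecidableEq V] (G : Set (Finset V)) (k j : ℕ) (K C : Finset V)
    (J : Finset (Finset V)) : Prop :=
  IsMjMinus G k j K C ∧ IsCycle G j J ∧ ∃! P : Finset V, P ∈ J ∧ P ∈ Flower K C

/-- A `j`-shell: a `(j+2)`-set all of whose `(j+1)`-subsets are `j`-simplices. -/
def IsShell (G : Set (Finset V)) (j : ℕ) (A : Finset V) : Prop :=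
  A.card = j + 2 ∧ ∀ τ ⊆ A, τ.card = j + 1 → τ ∈ G

/-- A copy of `M_j^*`. -/
def IsMjStar [DecidableEq V] (G : Set (Finset V)) (k j : ℕ) (K C : Finset V) (w a : V) : Prop :=
  IsMjMinus G k j K C ∧ w ∈ K \ C ∧ a ∉ K ∧ IsShell G j (insert a (insert w C))

/-- The support of a cochain. -/
def cochainSupport {G : Set (Finset V)} {i : ℕ} (f : Cochain G i) : Set (Finset V) :=
  {A | ∃ h : IsSimplex G i A, f ⟨A, h⟩ = 1}

/-- A cochain arising from a copy of `M_j^-`: its support is the flower `F(K,C)`. -/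
def ArisesFrom [DecidableEq V] (G : Set (Finset V)) (k j : ℕ) (f : Cochain G j)
    (K C : Finset V) : Prop :=
  IsMjMinus G k j K C ∧ cochainSupport f = Flower K C

/-- A `j`-cocycle generated by copies of `M_j^-`: it differs by a `j`-coboundary from a sum
of `j`-cocycles arising from copies of `M_j^-`. -/
def GeneratedByMjMinus [DecidableEq V] (G : Set (Finset V)) (k j : ℕ) (f : Cochain G j) : Prop :=
  ∃ (m : ℕ) (fs : Fin m → Cochain G j),
    (∀ i, ∃ K C, ArisesFrom G k j (fs i) K C) ∧
      f - (∑ i, fs i) ∈ coboundaries G j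

/-- Membership in `N_G`: a `j`-cocycle not generated by copies of `M_j^-`. -/
def InNG [DecidableEq V] (G : Set (Finset V)) (k j : ℕ) (f : Cochain G j) : Prop :=
  f ∈ cocycles G j ∧ ¬ GeneratedByMjMinus G k j f

/-- Traversability: the transitive closure of "lying in a common `k`-simplex" is `S × S`. -/
def Traversable (G : Set (Finset V)) (k : ℕ) (S : Set (Finset V)) : Prop :=
  ∀ σ₁ ∈ S, ∀ σ₂ ∈ S,
    Relation.TransGen
      (fun a b => a ∈ S ∧ b ∈ S ∧ ∃ K, IsSimplex G k K ∧ a ⊆ K ∧ b ⊆ K) σ₁ σ₂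

/-- A local obstacle: a `k`-simplex containing at least `k-j+1` many `j`-simplices,
each lying in no other `k`-simplex. -/
def IsLocalObstacle (G : Set (Finset V)) (k j : ℕ) (K : Finset V) : Prop :=
  IsSimplex G k K ∧
    k - j + 1 ≤ {σ : Finset V | IsSimplex G j σ ∧ σ ⊆ K ∧
      ∀ K', IsSimplex G k K' → σ ⊆ K' → K' = K}.ncard

/-- The random complex `G_p` given birth times `t`: all singletons together with all
non-empty subsets of `(k+1)`-sets with birth time at most `p`. -/
def complexAt (k n : ℕ) (t : Finset (Fin n) → ℝ) (p : ℝ) : Set (Finset (Fin n)) :=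
  {A | (∃ v, A = {v}) ∨
    (A.Nonempty ∧ ∃ K : Finset (Fin n), K.card = k + 1 ∧ t K ≤ p ∧ A ⊆ K)}

/-- The distribution of birth times: i.i.d. uniform on `[0,1]`. -/
noncomputable def birthMeasure (n : ℕ) : Measure (Finset (Fin n) → ℝ) :=
  Measure.pi fun _ => volume.restrict (Set.Icc (0 : ℝ) 1)

/-- `p_{M_j}`: the supremum of the probabilities `p ∈ [0,1]` at which `G_p` contains
a copy of `M_j`. -/
noncomputable def pMj (k j n : ℕ) (t : Finset (Fin n) → ℝ) : ℝ :=
  sSup {p : ℝ | p ∈ Set.Icc (0 : ℝ) 1 ∧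
    ∃ K C J, IsMj (complexAt k n t p) k j K C J}

/-- The threshold `p_j`. -/
noncomputable def pjThreshold (k j n : ℕ) : ℝ :=
  ((j + 1 : ℝ) * Real.log n + Real.log (Real.log n)) * (Nat.factorial (k - j)) /
    (((k - j + 1 : ℕ) : ℝ) * (n : ℝ) ^ (k - j))

/-- `p_j^-`. -/
noncomputable def pjMinus (k j n : ℕ) : ℝ :=
  (1 - 1 / Real.sqrt (Real.log n)) * ((j + 1 : ℝ) * Real.log n) * (Nat.factorial (k - j)) /
    (((k - j + 1 : ℕ) : ℝ) * (n : ℝ) ^ (k - j))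

/-- `p_{j-1}^-`. -/
noncomputable def pjPrevMinus (k j n : ℕ) : ℝ :=
  (1 - 1 / Real.sqrt (Real.log n)) * ((j : ℝ) * Real.log n) * (Nat.factorial (k - j + 1)) /
    (((k - j + 2 : ℕ) : ℝ) * (n : ℝ) ^ (k - j + 1))

/-- `p_j^{(1)}`. -/
noncomputable def pjOne (k j n : ℕ) : ℝ :=
  1 / (10 * ((j : ℝ) + 1) * (Nat.choose (k + 1) (j + 1)) * (n : ℝ) ^ (k - j))

/-- The number of copies of `M_j^-` in `G`. -/
noncomputable def countMjMinus (k j : ℕ) {n : ℕ} (G : Set (Finset (Fin n))) : ℕ :=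
  {x : Finset (Fin n) × Finset (Fin n) | IsMjMinus G k j x.1 x.2}.ncard

/-- The number of copies of `M_j^*` in `G`. -/
noncomputable def countMjStar (k j : ℕ) {n : ℕ} (G : Set (Finset (Fin n))) : ℕ :=
  {x : Finset (Fin n) × Finset (Fin n) × Fin n × Fin n |
    IsMjStar G k j x.1 x.2.1 x.2.2.1 x.2.2.2}.ncard

/-!
Call a `k`-simplex `K` with a centre `C` isolated over `[a, b]` if `K` is born by time `a` while no
other `k`-simplex containing a petal of `F(K,C)` is born by time `b`. Throughout `[a, b]` the
indicator of `F(K,C)` is then a cocycle, and a cycle meeting the flower in exactly one petal, once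
present, persists and shows that this cocycle is not a coboundary.

At `p_{j-1}^-` there are whp more than `n choose j` simplices that stay isolated up to time
`Δ * n ^ (-(k - j))`. Choose one petal from each: by counting dimensions, the chosen petals contain
a cycle, which yields the first copy of `M_j`. If `Δ` is large, then from that time on whp every
petal lies in a shell with apex outside its `k`-simplex, so every isolated simplex carries a copy.
The second copy is isolated from that time until slightly before the time at which the last isolated
simplices are expected. Isolated simplices still exist slightly after the latter time, but whp no
isolated simplex is born in between or later. All subsequent copies are therefore supported by the
same old simplices, and the one of these that stays isolated longest is the third copy.
-/

/-! ### Flowers, cycles and shells -/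

section Combinatorics

variable {G G' : Set (Finset V)} {j k : ℕ} {A C K P σ : Finset V} {J : Finset (Finset V)}

theorem IsCycle.mono (hJ : IsCycle G j J) (hG : G ⊆ G') : IsCycle G' j J :=
  ⟨fun σ hσ => ⟨hG (hJ.1 σ hσ).1, (hJ.1 σ hσ).2⟩, hJ.2⟩

theorem card_filter_subset_powersetCard [DecidablePred (C ⊆ ·)] (hC : C ⊆ σ) (e : ℕ) :
    ((σ.powersetCard (C.card + e)).filter (C ⊆ ·)).card = (σ.card - C.card).choose e := by
  rw [← Finset.card_sdiff_of_subset hC, ← Finset.card_powersetCard]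
  refine Finset.card_nbij' (· \ C) (C ∪ ·) ?_ ?_ ?_ ?_
  · intro A hA
    simp only [Finset.coe_filter, Finset.mem_powersetCard, Set.mem_ofPred_eq] at hA
    simp only [Finset.mem_coe, Finset.mem_powersetCard]
    exact ⟨Finset.sdiff_subset_sdiff hA.1.1 le_rfl, by
      rw [Finset.card_sdiff_of_subset hA.2, hA.1.2, Nat.add_sub_cancel_left]⟩
  · intro A hA
    simp only [Finset.mem_coe, Finset.mem_powersetCard] at hA
    simp only [Finset.coe_filter, Finset.mem_powersetCard, Set.mem_ofPred_eq]
    have hdisj : Disjoint C A := Finset.disjoint_sdiff.mono_right hA.1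
    exact ⟨⟨Finset.union_subset hC (hA.1.trans Finset.sdiff_subset), by
      rw [Finset.card_union_of_disjoint hdisj, hA.2]⟩, Finset.subset_union_left⟩
  · intro A hA
    simp only [Finset.coe_filter, Set.mem_ofPred_eq] at hA
    exact Finset.union_sdiff_of_subset hA.2
  · intro A hA
    simp only [Finset.mem_coe, Finset.mem_powersetCard] at hA
    exact Finset.union_sdiff_cancel_left (Finset.disjoint_sdiff.mono_right hA.1)

theorem IsShell.isCycle (hA : IsShell G j A) : IsCycle G j (A.powersetCard (j + 1)) := by
  refine ⟨fun σ hσ => ?_, fun τ hτ => ?_⟩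
  · rw [Finset.mem_powersetCard] at hσ
    exact ⟨hA.2 σ hσ.1 hσ.2, hσ.2⟩
  by_cases hτA : τ ⊆ A
  · rw [← hτ, card_filter_subset_powersetCard hτA, hA.1, hτ, Nat.add_sub_cancel_left]
    decide
  · rw [Finset.filter_false_of_mem fun σ hσ hτσ =>
      hτA (hτσ.trans (Finset.mem_powersetCard.1 hσ).1)]
    exact Even.zero

theorem even_card_symmDiff_iff {α : Type*} [DecidableEq α] (A B : Finset α) :
    Even (symmDiff A B).card ↔ (Odd A.card ↔ Odd B.card) := by
  have hcard : (symmDiff A B).card = (A \ B).card + (B \ A).card :=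
    Finset.card_union_of_disjoint disjoint_sdiff_sdiff
  have hA := Finset.card_sdiff_add_card_inter A B
  have hB := Finset.card_sdiff_add_card_inter B A
  rw [Finset.inter_comm] at hB
  grind

/-- By pigeonhole two subfamilies of `F` have the same boundary modulo `2`; their symmetric
difference is a cycle. -/
theorem exists_isCycle_of_choose_lt_card [Fintype V] {F : Finset (Finset V)}
    (hF : ∀ σ ∈ F, IsSimplex G j σ) (hcard : (Fintype.card V).choose j < F.card) :
    ∃ J ⊆ F, J.Nonempty ∧ IsCycle G j J := by
  let boundary (J : Finset (Finset V)) : Finset (Finset V) :=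
    (Finset.univ.powersetCard j).filter fun τ => Odd (J.filter (τ ⊆ ·)).card
  have hlt : ((Finset.univ.powersetCard j : Finset (Finset V)).powerset).card
      < F.powerset.card := by
    simpa [Finset.card_powersetCard] using Nat.pow_lt_pow_right one_lt_two hcard
  obtain ⟨A, hA, B, hB, hne, hAB⟩ := Finset.exists_ne_map_eq_of_card_lt_of_maps_to hlt
    (f := boundary) fun J _ => Finset.mem_powerset.2 (Finset.filter_subset _ _)
  have hsub : symmDiff A B ⊆ F := Finset.symmDiff_subset_union.trans
    (Finset.union_subset (Finset.mem_powerset.1 hA) (Finset.mem_powerset.1 hB))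
  refine ⟨symmDiff A B, hsub, Finset.symmDiff_nonempty.2 hne, fun σ hσ => hF σ (hsub hσ),
    fun τ hτ => ?_⟩
  have hτ' : τ ∈ boundary A ↔ τ ∈ boundary B := by rw [hAB]
  rw [show (symmDiff A B).filter (τ ⊆ ·) = symmDiff (A.filter (τ ⊆ ·)) (B.filter (τ ⊆ ·)) by
    ext σ; simp only [Finset.mem_filter, Finset.mem_symmDiff]; tauto]
  rw [even_card_symmDiff_iff]
  simpa [boundary, hτ] using hτ'

variable [DecidableEq V]

theorem mem_flower_iff (hC : C ⊆ K) :
    P ∈ Flower K C ↔ C ⊆ P ∧ P ⊆ K ∧ P.card = C.card + 1 := by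
  constructor
  · rintro ⟨w, hw, rfl⟩
    rw [Finset.mem_sdiff] at hw
    exact ⟨Finset.subset_insert _ _, Finset.insert_subset hw.1 hC,
      Finset.card_insert_of_notMem hw.2⟩
  · rintro ⟨hCP, hPK, hcard⟩
    obtain ⟨w, hw, rfl⟩ := Finset.exists_eq_insert_iff.2 ⟨hCP, hcard.symm⟩
    exact ⟨w, Finset.mem_sdiff.2 ⟨hPK (Finset.mem_insert_self _ _), hw⟩, rfl⟩

theorem IsMjStar.isMj {w a : V} (h : IsMjStar G k j K C w a) :
    IsMj G k j K C ((insert a (insert w C)).powersetCard (j + 1)) := by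
  obtain ⟨hminus, hw, ha, hshell⟩ := h
  have hCK := hminus.2.2.2.1
  have hCcard := hminus.2.2.1
  have hpetal : insert w C ∈ Flower K C := ⟨w, hw, rfl⟩
  have hpetal_card : (insert w C).card = j + 1 := hCcard ▸ ((mem_flower_iff hCK).1 hpetal).2.2
  refine ⟨hminus, hshell.isCycle, insert w C,
    ⟨Finset.mem_powersetCard.2 ⟨Finset.subset_insert _ _, hpetal_card⟩, hpetal⟩, ?_⟩
  rintro P ⟨hP, hPflower⟩
  obtain ⟨hPsub, hPcard⟩ := Finset.mem_powersetCard.1 hP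
  have haP : a ∉ P := fun haP => ha (((mem_flower_iff hCK).1 hPflower).2.1 haP)
  exact Finset.eq_of_subset_of_card_le ((Finset.subset_insert_iff_of_notMem haP).1 hPsub)
    (hpetal_card.trans hPcard.symm).le

theorem IsMj.of_isMjMinus (h : IsMj G k j K C J) (hG : G ⊆ G') (hminus : IsMjMinus G' k j K C) :
    IsMj G' k j K C J :=
  ⟨hminus, h.2.1.mono hG, h.2.2⟩

theorem IsMjMinus.exists_mem_sdiff (h : IsMjMinus G k j K C) (hjk : j ≤ k) : ∃ w, w ∈ K \ C := by
  refine Finset.sdiff_nonempty.2 fun hKC => ?_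
  have hcard := Finset.card_le_card hKC
  rw [h.1.2, h.2.2.1] at hcard
  omega

theorem IsMjMinus.isSimplex_of_mem_flower (hG : IsKComplex G k) (h : IsMjMinus G k j K C)
    (hP : P ∈ Flower K C) : IsSimplex G j P := by
  obtain ⟨-, hPK, hPcard⟩ := (mem_flower_iff h.2.2.2.1).1 hP
  exact ⟨hG.down K h.1.1 P hPK (Finset.card_pos.1 (by omega)), by rw [hPcard, h.2.2.1]⟩

/-- One petal is picked from each flower. These petals are distinct, and so many of them must
contain a cycle, which meets the flower of each of its members in that member only. -/
theorem exists_isMj_of_choose_lt_card [Fintype V] (hG : IsKComplex G k) (hjk : j ≤ k)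
    {X : Finset (Finset V)} {centre : Finset V → Finset V}
    (hX : ∀ K ∈ X, IsMjMinus G k j K (centre K)) (hcard : (Fintype.card V).choose j < X.card) :
    ∃ K ∈ X, ∃ J, IsMj G k j K (centre K) J := by
  have hpetal (K : Finset V) : ∃ P, K ∈ X → P ∈ Flower K (centre K) := by
    by_cases hK : K ∈ X
    · obtain ⟨w, hw⟩ := (hX K hK).exists_mem_sdiff hjk
      exact ⟨insert w (centre K), fun _ => ⟨w, hw, rfl⟩⟩
    · exact ⟨∅, fun h => absurd h hK⟩
  choose petal hpetal using hpetal
  have hunique {K K'} (hK : K ∈ X) (hK' : K' ∈ X) (hsub : petal K ⊆ K') : K' = K :=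
    (hX K hK).2.2.2.2 _ (hpetal K hK) K' (hX K' hK').1 hsub
  have hpetal_sub {K} (hK : K ∈ X) : petal K ⊆ K :=
    ((mem_flower_iff (hX K hK).2.2.2.1).1 (hpetal K hK)).2.1
  have hinj : Set.InjOn petal X := fun K hK K' hK' h =>
    (hunique hK hK' (h ▸ hpetal_sub hK')).symm
  obtain ⟨J, hJX, ⟨P, hP⟩, hJ⟩ := exists_isCycle_of_choose_lt_card (G := G) (j := j)
    (F := X.image petal)
    (by
      simp only [Finset.forall_mem_image]
      exact fun K hK => (hX K hK).isSimplex_of_mem_flower hG (hpetal K hK))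
    (by rwa [Finset.card_image_of_injOn hinj])
  obtain ⟨K, hK, rfl⟩ := Finset.mem_image.1 (hJX hP)
  refine ⟨K, hK, J, hX K hK, hJ, petal K, ⟨hP, hpetal K hK⟩, ?_⟩
  rintro P' ⟨hP', hflower⟩
  obtain ⟨K', hK', rfl⟩ := Finset.mem_image.1 (hJX hP')
  rw [hunique hK' hK ((mem_flower_iff (hX K hK).2.2.2.1).1 hflower).2.1]

/-- Every `j`-simplex contained in a potential `k`-simplex `K` extends to a `j`-shell by a vertex
outside `K`. -/
def ExtendsToShells (G : Set (Finset V)) (k j : ℕ) : Prop :=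
  ∀ K P : Finset V, K.card = k + 1 → P ⊆ K → P.card = j + 1 →
    ∃ a ∉ K, ∀ Q ∈ P.powersetCard j, insert a Q ∈ G

theorem ExtendsToShells.mono (h : ExtendsToShells G k j) (hG : G ⊆ G') :
    ExtendsToShells G' k j := fun K P hK hPK hP =>
  have ⟨a, ha, hQ⟩ := h K P hK hPK hP
  ⟨a, ha, fun Q hQP => hG (hQ Q hQP)⟩

theorem ExtendsToShells.exists_isMj (h : ExtendsToShells G k j) (hG : IsKComplex G k)
    (hjk : j ≤ k) (hminus : IsMjMinus G k j K C) : ∃ J, IsMj G k j K C J := by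
  obtain ⟨w, hw⟩ := hminus.exists_mem_sdiff hjk
  have hflower : insert w C ∈ Flower K C := ⟨w, hw, rfl⟩
  have hP := hminus.isSimplex_of_mem_flower hG hflower
  have hPK := ((mem_flower_iff hminus.2.2.2.1).1 hflower).2.1
  obtain ⟨a, ha, hQ⟩ := h K (insert w C) hminus.1.2 hPK hP.2
  have haP : a ∉ insert w C := fun haP => ha (hPK haP)
  refine ⟨_, IsMjStar.isMj ⟨hminus, hw, ha, ?_, fun τ hτ hτcard => ?_⟩⟩
  · rw [Finset.card_insert_of_notMem haP, hP.2]
  by_cases haτ : a ∈ τ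
  · rw [← Finset.insert_erase haτ]
    exact hQ _ (Finset.mem_powersetCard.2 ⟨Finset.subset_insert_iff.1 hτ, by
      rw [Finset.card_erase_of_mem haτ, hτcard, Nat.add_sub_cancel]⟩)
  · rw [Finset.eq_of_subset_of_card_le ((Finset.subset_insert_iff_of_notMem haτ).1 hτ)
      (hP.2.trans hτcard.symm).le]
    exact hP.1

end Combinatorics

/-! ### The cohomological obstruction -/

section Cohomology

variable {G : Set (Finset V)} {i j k : ℕ} {A C K : Finset V} {J : Finset (Finset V)}

/-- The extension of a cochain by zero to all finite sets of vertices. -/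
noncomputable def Cochain.extend (f : Cochain G i) (A : Finset V) : ZMod 2 :=
  if h : IsSimplex G i A then f ⟨A, h⟩ else 0

theorem coboundary_apply (f : Cochain G i) (σ : {A : Finset V // IsSimplex G (i + 1) A}) :
    coboundary G i f σ = ∑ τ ∈ (σ : Finset V).powersetCard (i + 1), Cochain.extend f τ :=
  rfl

theorem IsCycle.sum_extend_eq_zero (hJ : IsCycle G j J) {f : Cochain G j}
    (hf : f ∈ coboundaries G j) : ∑ σ ∈ J, Cochain.extend f σ = 0 := by
  cases j with
  | zero =>
    obtain rfl : f = 0 := hf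
    exact Finset.sum_eq_zero fun _ _ => by simp [Cochain.extend]
  | succ i =>
    obtain ⟨g, rfl⟩ := hf
    calc ∑ σ ∈ J, Cochain.extend (coboundary G i g) σ
        = ∑ σ ∈ J, ∑ τ ∈ σ.powersetCard (i + 1), Cochain.extend g τ :=
          Finset.sum_congr rfl fun σ hσ => by rw [Cochain.extend, dif_pos (hJ.1 σ hσ)]; rfl
      _ = ∑ τ ∈ J.biUnion (Finset.powersetCard (i + 1)), ∑ _ ∈ J.filter (τ ⊆ ·),
            Cochain.extend g τ := by
          refine Finset.sum_comm' fun σ τ => ?_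
          simp only [Finset.mem_powersetCard, Finset.mem_filter, Finset.mem_biUnion]
          tauto
      _ = 0 := Finset.sum_eq_zero fun τ hτ => by
          obtain ⟨_, -, hτσ⟩ := Finset.mem_biUnion.1 hτ
          rw [Finset.sum_const, nsmul_eq_mul,
            (ZMod.natCast_eq_zero_iff_even).2 (hJ.2 τ (Finset.mem_powersetCard.1 hτσ).2), zero_mul]

variable [DecidableEq V]

/-- The `j`-cochain with support the flower `F(K,C)`. -/
noncomputable def flowerCochain (G : Set (Finset V)) (j : ℕ) (K C : Finset V) : Cochain G j :=
  fun σ => if (σ : Finset V) ∈ Flower K C then 1 else 0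

theorem IsMjMinus.flowerCochain_mem_cocycles (hG : IsKComplex G k)
    (hpure : ∀ A, IsSimplex G (j + 1) A → ∃ K, IsSimplex G k K ∧ A ⊆ K)
    (h : IsMjMinus G k j K C) : flowerCochain G j K C ∈ cocycles G j := by
  obtain ⟨hK, -, rfl, hCK, hunique⟩ := h
  refine LinearMap.mem_ker.2 (funext fun ⟨A, hA⟩ => ?_)
  rw [coboundary_apply]
  by_cases hpetal : ∃ P ∈ Flower K C, P ⊆ A
  · obtain ⟨P, hP, hPA⟩ := hpetal
    obtain ⟨K', hK', hAK'⟩ := hpure A hA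
    obtain rfl : K' = K := hunique P hP K' hK' (hPA.trans hAK')
    have hCA : C ⊆ A := ((mem_flower_iff hCK).1 hP).1.trans hPA
    calc ∑ τ ∈ A.powersetCard (C.card + 1), Cochain.extend (flowerCochain G C.card K' C) τ
        = ∑ τ ∈ A.powersetCard (C.card + 1), if C ⊆ τ then 1 else 0 := by
          refine Finset.sum_congr rfl fun τ hτ => ?_
          obtain ⟨hτA, hτcard⟩ := Finset.mem_powersetCard.1 hτ
          have hτG : IsSimplex G C.card τ :=
            ⟨hG.down A hA.1 τ hτA (Finset.card_pos.1 (by omega)), hτcard⟩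
          simp only [Cochain.extend, flowerCochain, hτG, mem_flower_iff hCK, hτA.trans hAK',
            hτcard, dite_true, and_true]
      _ = 0 := by
          rw [Finset.sum_boole, card_filter_subset_powersetCard hCA, hA.2,
            show C.card + 1 + 1 - C.card = 2 by omega]
          rfl
  · refine Finset.sum_eq_zero fun τ hτ => ?_
    have hτ' : τ ∉ Flower K C := fun h => hpetal ⟨τ, h, (Finset.mem_powersetCard.1 hτ).1⟩
    simp [Cochain.extend, flowerCochain, hτ']

theorem IsMj.not_subsingleton_cohomology (hG : IsKComplex G k)
    (hpure : ∀ A, IsSimplex G (j + 1) A → ∃ K, IsSimplex G k K ∧ A ⊆ K)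
    (h : IsMj G k j K C J) : ¬ Subsingleton (cohomology G j) := by
  obtain ⟨hminus, hJ, P, ⟨hPJ, hP⟩, hPunique⟩ := h
  intro hsub
  have hcoboundary : flowerCochain G j K C ∈ coboundaries G j := by
    have htop := Submodule.Quotient.subsingleton_iff.1 hsub
    exact Submodule.mem_comap.1 (htop ▸ Submodule.mem_top :
      (⟨_, hminus.flowerCochain_mem_cocycles hG hpure⟩ : cocycles G j) ∈
        (coboundaries G j).comap (cocycles G j).subtype)
  have hone : ∑ σ ∈ J, Cochain.extend (flowerCochain G j K C) σ = 1 := by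
    rw [Finset.sum_eq_single_of_mem P hPJ fun σ hσ hne => ?_]
    · simp [Cochain.extend, flowerCochain, hJ.1 P hPJ, hP]
    · have hσ' : σ ∉ Flower K C := fun h => hne (hPunique σ ⟨hσ, h⟩)
      simp [Cochain.extend, flowerCochain, hσ']
  exact one_ne_zero (hone.symm.trans (hJ.sum_extend_eq_zero hcoboundary))

end Cohomology

/-! ### Isolated simplices and the three copies -/

section BirthTimes

/-- The combinatorial data of a copy of `M_j^-`: a `(k+1)`-set `K` with a `j`-subset `C`. -/
structure IsFlowerBase (k j : ℕ) (K C : Finset V) : Prop where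
  card_simplex : K.card = k + 1
  card_centre : C.card = j
  subset : C ⊆ K

/-- The `(k+1)`-sets whose birth destroys the copy of `M_j^-` at `(K,C)`. -/
noncomputable def rivals [Fintype V] [DecidableEq V] (k : ℕ) (K C : Finset V) :
    Finset (Finset V) :=
  {S | S.card = k + 1 ∧ S ≠ K ∧ ∃ P ∈ Flower K C, P ⊆ S}

theorem mem_rivals [Fintype V] [DecidableEq V] {k : ℕ} {K C S : Finset V} :
    S ∈ rivals k K C ↔ S.card = k + 1 ∧ S ≠ K ∧ ∃ P ∈ Flower K C, P ⊆ S := by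
  simp [rivals]

/-- At birth times `t`, the set `K` is born by time `a`, and all its rivals only after time `b`. -/
def IsIsolated [Fintype V] [DecidableEq V] (k : ℕ) (t : Finset V → ℝ) (a b : ℝ)
    (K C : Finset V) : Prop :=
  t K ≤ a ∧ ∀ S ∈ rivals k K C, b < t S

theorem IsIsolated.mono [Fintype V] [DecidableEq V] {k : ℕ} {t : Finset V → ℝ} {a a' b b' : ℝ}
    {K C : Finset V} (h : IsIsolated k t a b K C) (ha : a ≤ a') (hb : b' ≤ b) :
    IsIsolated k t a' b' K C :=
  ⟨h.1.trans ha, fun S hS => hb.trans_lt (h.2 S hS)⟩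

variable {n k j : ℕ} {t : Finset (Fin n) → ℝ} {p q r s : ℝ} {A C K : Finset (Fin n)}

theorem complexAt_mono (hpq : p ≤ q) : complexAt k n t p ⊆ complexAt k n t q :=
  fun _ => Or.imp_right fun ⟨hA, K, hK, ht, hAK⟩ => ⟨hA, K, hK, ht.trans hpq, hAK⟩

theorem isKComplex_complexAt : IsKComplex (complexAt k n t p) k where
  down A hA B hBA hB := by
    rcases hA with ⟨v, rfl⟩ | ⟨-, K, hK, ht, hAK⟩
    · exact Or.inl ⟨v, (Finset.subset_singleton_iff.1 hBA).resolve_left hB.ne_empty⟩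
    · exact Or.inr ⟨hB, K, hK, ht, hBA.trans hAK⟩
  singletons v := Or.inl ⟨v, rfl⟩
  dim A hA := by
    rcases hA with ⟨v, rfl⟩ | ⟨-, K, hK, -, hAK⟩
    · simp
    · exact hK ▸ Finset.card_le_card hAK

theorem isSimplex_complexAt (hK : K.card = k + 1) (ht : t K ≤ p) :
    IsSimplex (complexAt k n t p) k K :=
  ⟨Or.inr ⟨Finset.card_pos.1 (by omega), K, hK, ht, subset_rfl⟩, hK⟩

theorem IsSimplex.exists_superset {i : ℕ} (hi : 1 ≤ i) (hA : IsSimplex (complexAt k n t p) i A) :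
    ∃ K, IsSimplex (complexAt k n t p) k K ∧ t K ≤ p ∧ A ⊆ K := by
  obtain ⟨⟨v, rfl⟩ | ⟨-, K, hK, ht, hAK⟩, hcard⟩ := hA
  · rw [Finset.card_singleton] at hcard
    omega
  · exact ⟨K, isSimplex_complexAt hK ht, ht, hAK⟩

theorem isSimplex_complexAt_iff (hk : 1 ≤ k) :
    IsSimplex (complexAt k n t p) k K ↔ K.card = k + 1 ∧ t K ≤ p := by
  refine ⟨fun hK => ⟨hK.2, ?_⟩, fun h => isSimplex_complexAt h.1 h.2⟩
  obtain ⟨K', hK', ht, hsub⟩ := hK.exists_superset hk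
  rwa [Finset.eq_of_subset_of_card_le hsub (hK'.2.trans hK.2.symm).le]

theorem isMjMinus_complexAt_iff (hj : 1 ≤ j) (hk : 1 ≤ k) :
    IsMjMinus (complexAt k n t p) k j K C ↔ IsFlowerBase k j K C ∧ IsIsolated k t p p K C := by
  simp only [IsMjMinus, isSimplex_complexAt_iff hk]
  constructor
  · rintro ⟨⟨hK, ht⟩, -, hC, hCK, hunique⟩
    refine ⟨⟨hK, hC, hCK⟩, ht, fun S hS => ?_⟩
    obtain ⟨hScard, hSK, P, hP, hPS⟩ := mem_rivals.1 hS
    exact not_le.1 fun hSt => hSK (hunique P hP S ⟨hScard, hSt⟩ hPS)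
  · rintro ⟨⟨hK, hC, hCK⟩, ht, hrivals⟩
    refine ⟨⟨hK, ht⟩, Or.inr ⟨Finset.card_pos.1 (by omega), K, hK, ht, hCK⟩, hC, hCK, ?_⟩
    rintro P hP S ⟨hScard, hSt⟩ hPS
    by_contra hSK
    exact (hrivals S (mem_rivals.2 ⟨hScard, hSK, P, hP, hPS⟩)).not_ge hSt

theorem IsMj.mono_of_isIsolated (hj : 1 ≤ j) (hk : 1 ≤ k) {J : Finset (Finset (Fin n))}
    (hMj : IsMj (complexAt k n t r) k j K C J) (h : IsIsolated k t r s K C)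
    (hp : p ∈ Set.Icc r s) : IsMj (complexAt k n t p) k j K C J :=
  hMj.of_isMjMinus (complexAt_mono hp.1) ((isMjMinus_complexAt_iff hj hk).2
    ⟨((isMjMinus_complexAt_iff hj hk).1 hMj.1).1, h.mono hp.1 hp.2⟩)

theorem exists_isMj_of_choose_lt_card_isolated (hj : 1 ≤ j) (hjk : j ≤ k) (hrs : r ≤ s)
    {X : Finset (Finset (Fin n))} {centre : Finset (Fin n) → Finset (Fin n)}
    (hX : ∀ K ∈ X, IsFlowerBase k j K (centre K) ∧ IsIsolated k t r s K (centre K))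
    (hcard : n.choose j < X.card) :
    ∃ K C J, ∀ p ∈ Set.Icc r s, IsMj (complexAt k n t p) k j K C J := by
  obtain ⟨K, hK, J, hJ⟩ := exists_isMj_of_choose_lt_card isKComplex_complexAt hjk
    (fun K hK => (isMjMinus_complexAt_iff hj (hj.trans hjk)).2
      ⟨(hX K hK).1, (hX K hK).2.mono le_rfl hrs⟩)
    (by rwa [Fintype.card_fin])
  exact ⟨K, _, J, fun p hp => hJ.mono_of_isIsolated hj (hj.trans hjk) (hX K hK).2 hp⟩

theorem ExtendsToShells.exists_isMj_Icc (hj : 1 ≤ j) (hjk : j ≤ k) (hrs : r ≤ s)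
    (h : ExtendsToShells (complexAt k n t r) k j) (hKC : IsFlowerBase k j K C)
    (hiso : IsIsolated k t r s K C) :
    ∃ J, ∀ p ∈ Set.Icc r s, IsMj (complexAt k n t p) k j K C J :=
  have ⟨J, hJ⟩ := h.exists_isMj isKComplex_complexAt hjk
    ((isMjMinus_complexAt_iff hj (hj.trans hjk)).2 ⟨hKC, hiso.mono le_rfl hrs⟩)
  ⟨J, fun _ hp => hJ.mono_of_isIsolated hj (hj.trans hjk) hiso hp⟩

theorem exists_forall_of_antitone {ι α : Type*} [Finite ι] [Nonempty α] [LinearOrder α]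
    {Φ : ι → α → Prop} (hΦ : ∀ i, Antitone (Φ i)) (h : ∀ a, ∃ i, Φ i a) : ∃ i, ∀ a, Φ i a := by
  by_contra! hfail
  choose b hb using hfail
  obtain ⟨a, ha⟩ := Finite.exists_le b
  obtain ⟨i, hi⟩ := h a
  exact hb i (hΦ i (ha i) hi)

/-- Below `pMj` there are always later copies, whose bases are isolated with `K` born by time `q`;
as there are only finitely many bases, one of them serves all the way up to `pMj`. -/
theorem IsMj.exists_isIsolated_of_lt_pMj (hj : 1 ≤ j) (hk : 1 ≤ k) (hs : s ∈ Set.Icc (0 : ℝ) 1)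
    {J : Finset (Finset (Fin n))} (hMj : IsMj (complexAt k n t s) k j K C J)
    (hborn : ∀ K C, IsFlowerBase k j K C → ∀ p ∈ Set.Icc s 1, IsIsolated k t p p K C → t K ≤ q) :
    ∃ K C, IsFlowerBase k j K C ∧ ∀ p < pMj k j n t, IsIsolated k t q p K C := by
  have hbase (p' : ℝ) (hp' : p' ∈ Set.Icc s 1) {K C J}
      (hMj : IsMj (complexAt k n t p') k j K C J) :
      IsFlowerBase k j K C ∧ IsIsolated k t q p' K C := by
    obtain ⟨hKC, hiso⟩ := (isMjMinus_complexAt_iff hj hk).1 hMj.1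
    exact ⟨hKC, hborn K C hKC p' hp' hiso, hiso.2⟩
  have hexists (p : Set.Iio (pMj k j n t)) : ∃ KC : Finset (Fin n) × Finset (Fin n),
      IsFlowerBase k j KC.1 KC.2 ∧ IsIsolated k t q p KC.1 KC.2 := by
    obtain ⟨p, hp⟩ := p
    rcases le_or_gt p s with hps | hsp
    · obtain ⟨hKC, hiso⟩ := hbase s ⟨le_rfl, hs.2⟩ hMj
      exact ⟨(K, C), hKC, hiso.mono le_rfl hps⟩
    · rw [Set.mem_Iio, pMj] at hp
      obtain ⟨p', ⟨hp', K', C', J', hMj'⟩, hlt⟩ :=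
        exists_lt_of_lt_csSup (by exact ⟨s, hs, K, C, J, hMj⟩) hp
      obtain ⟨hKC, hiso⟩ := hbase p' ⟨(hsp.trans hlt).le, hp'.2⟩ hMj'
      exact ⟨(K', C'), hKC, hiso.mono le_rfl hlt.le⟩
  have hanti (KC : Finset (Fin n) × Finset (Fin n)) : Antitone fun p : Set.Iio (pMj k j n t) =>
      IsFlowerBase k j KC.1 KC.2 ∧ IsIsolated k t q p KC.1 KC.2 :=
    fun _ _ hpp' h => ⟨h.1, h.2.mono le_rfl hpp'⟩
  obtain ⟨⟨K, C⟩, hKC⟩ := exists_forall_of_antitone hanti hexists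
  obtain ⟨p₀, hp₀⟩ := exists_lt (pMj k j n t)
  exact ⟨K, C, (hKC ⟨p₀, hp₀⟩).1, fun p hp => (hKC ⟨p, hp⟩).2⟩

/-- The first copy is given, the second and third are supported by shells. The third survives up to
`pMj` because a copy existing after time `q₂` has its `k`-simplex born by time `q`. -/
theorem exists_three_isMj (hj : 1 ≤ j) (hjk : j ≤ k) {q₂ : ℝ} (hsq : s ≤ q) (hqq₂ : q ≤ q₂)
    (hq₂ : q₂ ∈ Set.Icc (0 : ℝ) 1)
    (hfirst : ∃ K C J, ∀ p ∈ Set.Icc r s, IsMj (complexAt k n t p) k j K C J)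
    (hsecond : ∃ K C, IsFlowerBase k j K C ∧ IsIsolated k t s q K C)
    (hlate : ∃ K C, IsFlowerBase k j K C ∧ IsIsolated k t q₂ q₂ K C)
    (hshell : ExtendsToShells (complexAt k n t s) k j)
    (hborn : ∀ K C, IsFlowerBase k j K C → ∀ p ∈ Set.Icc q₂ 1,
      IsIsolated k t p p K C → t K ≤ q) :
    ∃ K₁ C₁ J₁ K₂ C₂ J₂ K₃ C₃ J₃, ∀ p, r ≤ p → p < pMj k j n t →
      (IsMj (complexAt k n t p) k j K₁ C₁ J₁ ∨ IsMj (complexAt k n t p) k j K₂ C₂ J₂ ∨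
        IsMj (complexAt k n t p) k j K₃ C₃ J₃) := by
  obtain ⟨K₁, C₁, J₁, h₁⟩ := hfirst
  obtain ⟨K₂, C₂, hKC₂, hiso₂⟩ := hsecond
  obtain ⟨J₂, h₂⟩ := hshell.exists_isMj_Icc hj hjk hsq hKC₂ hiso₂
  obtain ⟨K, C, hKC, hiso⟩ := hlate
  obtain ⟨J, hMj⟩ := (hshell.mono (complexAt_mono (hsq.trans hqq₂))).exists_isMj_Icc
    hj hjk le_rfl hKC hiso
  have hMj : IsMj (complexAt k n t q₂) k j K C J := hMj q₂ ⟨le_rfl, le_rfl⟩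
  obtain ⟨K₃, C₃, hKC₃, hiso₃⟩ := hMj.exists_isIsolated_of_lt_pMj hj (hj.trans hjk) hq₂ hborn
  have hthird : ∃ J₃, ∀ p, q ≤ p → p < pMj k j n t → IsMj (complexAt k n t p) k j K₃ C₃ J₃ := by
    rcases lt_or_ge q (pMj k j n t) with hq | hq
    · obtain ⟨J₃, h₃⟩ := (hshell.mono (complexAt_mono hsq)).exists_isMj_Icc hj hjk le_rfl hKC₃
        (hiso₃ q hq)
      exact ⟨J₃, fun p hqp hp => (h₃ q ⟨le_rfl, le_rfl⟩).mono_of_isIsolated hj (hj.trans hjk)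
        (hiso₃ p hp) ⟨hqp, le_rfl⟩⟩
    · exact ⟨∅, fun p hqp hp => absurd (hq.trans hqp) hp.not_ge⟩
  obtain ⟨J₃, h₃⟩ := hthird
  refine ⟨K₁, C₁, J₁, K₂, C₂, J₂, K₃, C₃, J₃, fun p hrp hp => ?_⟩
  rcases le_total p s with hps | hsp
  · exact Or.inl (h₁ p ⟨hrp, hps⟩)
  rcases le_total p q with hpq | hqp
  · exact Or.inr (Or.inl (h₂ p ⟨hsp, hpq⟩))
  · exact Or.inr (Or.inr (h₃ p hqp hp))

end BirthTimes

/-! ### Counting rivals -/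

section Counting

variable {j k : ℕ} {K C K' C' : Finset V}

theorem IsFlowerBase.card_sdiff [DecidableEq V] (h : IsFlowerBase k j K C) :
    (K \ C).card = k + 1 - j := by
  rw [Finset.card_sdiff_of_subset h.subset, h.card_simplex, h.card_centre]

variable [Fintype V]

theorem card_isFlowerBase_le (k j : ℕ) :
    (Finset.univ.filter fun KC : Finset V × Finset V => IsFlowerBase k j KC.1 KC.2).card
      ≤ 2 ^ (k + 1) * Fintype.card V ^ (k + 1) := by
  have hsub : (Finset.univ.filter fun KC : Finset V × Finset V => IsFlowerBase k j KC.1 KC.2)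
      ⊆ (Finset.univ.powersetCard (k + 1)).biUnion fun K => {K} ×ˢ K.powerset := by
    rintro ⟨K, C⟩ hKC
    have h := (Finset.mem_filter.1 hKC).2
    exact Finset.mem_biUnion.2 ⟨K, Finset.mem_powersetCard.2
      ⟨Finset.subset_univ _, h.card_simplex⟩, by simp [h.subset]⟩
  refine (Finset.card_le_card hsub).trans ((Finset.card_biUnion_le_card_mul _ _ (2 ^ (k + 1))
    fun K hK => ?_).trans ?_)
  · simp [(Finset.mem_powersetCard.1 hK).2]
  · rw [mul_comm, Finset.card_powersetCard, Finset.card_univ]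
    gcongr
    exact Nat.choose_le_pow _ _

variable [DecidableEq V]

theorem card_filter_superset_le {m e : ℕ} (Q : Finset V) (hm : m = Q.card + e) :
    (Finset.univ.filter fun S : Finset V => S.card = m ∧ Q ⊆ S).card
      ≤ (Fintype.card V).choose e := by
  have hfilter : (Finset.univ.filter fun S : Finset V => S.card = m ∧ Q ⊆ S)
      = (Finset.univ.powersetCard (Q.card + e)).filter (Q ⊆ ·) := by
    ext S
    simp [hm]
  rw [hfilter, card_filter_subset_powersetCard (Finset.subset_univ Q) e, Finset.card_univ]
  exact Nat.choose_le_choose e (Nat.sub_le _ _)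

theorem IsFlowerBase.card_rivals_le (h : IsFlowerBase k j K C) (hjk : j ≤ k) :
    (rivals k K C).card ≤ (k - j + 1) * (Fintype.card V).choose (k - j) := by
  have hsub : rivals k K C ⊆ (K \ C).biUnion fun w =>
      Finset.univ.filter fun S => S.card = k + 1 ∧ insert w C ⊆ S := by
    intro S hS
    obtain ⟨hScard, -, _, ⟨w, hw, rfl⟩, hPS⟩ := mem_rivals.1 hS
    exact Finset.mem_biUnion.2
      ⟨w, hw, Finset.mem_filter.2 ⟨Finset.mem_univ _, hScard, hPS⟩⟩
  calc (rivals k K C).card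
      ≤ (K \ C).card * (Fintype.card V).choose (k - j) := by
        refine (Finset.card_le_card hsub).trans (Finset.card_biUnion_le_card_mul _ _ _ ?_)
        intro w hw
        refine card_filter_superset_le _ ?_
        rw [Finset.card_insert_of_notMem (Finset.mem_sdiff.1 hw).2, h.card_centre]
        omega
    _ = (k - j + 1) * (Fintype.card V).choose (k - j) := by
        rw [h.card_sdiff, Nat.sub_add_comm hjk]

theorem IsFlowerBase.le_card_rivals (h : IsFlowerBase k j K C) (hjk : j < k) :
    (k - j + 1) * (Fintype.card V - (k + 1)).choose (k - j) ≤ (rivals k K C).card := by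
  have hcard : ((K \ C) ×ˢ (Finset.univ \ K).powersetCard (k - j)).card
      = (k - j + 1) * (Fintype.card V - (k + 1)).choose (k - j) := by
    rw [Finset.card_product, h.card_sdiff, Finset.card_powersetCard,
      Finset.card_sdiff_of_subset (Finset.subset_univ _), h.card_simplex, Finset.card_univ,
      Nat.sub_add_comm hjk.le]
  have hsplit {w : V} {Y : Finset V}
      (hx : (w, Y) ∈ (K \ C) ×ˢ (Finset.univ \ K).powersetCard (k - j)) :
      (insert w C ∪ Y) ∩ K = insert w C ∧ (insert w C ∪ Y) \ K = Y := by
    obtain ⟨hw, hY⟩ := Finset.mem_product.1 hx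
    have hwK : insert w C ⊆ K := Finset.insert_subset (Finset.mem_sdiff.1 hw).1 h.subset
    have hYK : Disjoint Y K :=
      Finset.sdiff_disjoint.mono_left (Finset.mem_powersetCard.1 hY).1
    constructor
    · rw [Finset.union_inter_distrib_right, Finset.inter_eq_left.2 hwK,
        Finset.disjoint_iff_inter_eq_empty.1 hYK, Finset.union_empty]
    · rw [Finset.union_sdiff_distrib, Finset.sdiff_eq_empty_iff_subset.2 hwK,
        Finset.sdiff_eq_self_of_disjoint hYK, Finset.empty_union]
  rw [← hcard]
  refine Finset.card_le_card_of_injOn (fun x => insert x.1 C ∪ x.2) ?_ ?_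
  · rintro ⟨w, Y⟩ hx
    obtain ⟨hinter, hsdiff⟩ := hsplit hx
    obtain ⟨hw, hY⟩ := Finset.mem_product.1 hx
    have hYcard := (Finset.mem_powersetCard.1 hY).2
    refine mem_rivals.2 ⟨?_, fun hK => ?_, _, ⟨w, hw, rfl⟩, Finset.subset_union_left⟩
    · rw [← Finset.card_inter_add_card_sdiff _ K, hinter, hsdiff, hYcard,
        Finset.card_insert_of_notMem (Finset.mem_sdiff.1 hw).2, h.card_centre]
      omega
    · have hempty : Y = ∅ := by rw [← hsdiff, show insert w C ∪ Y = K from hK, sdiff_self]; rfl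
      rw [hempty, Finset.card_empty] at hYcard
      omega
  · rintro ⟨w, Y⟩ hx ⟨w', Y'⟩ hx' (heq : insert w C ∪ Y = insert w' C ∪ Y')
    have hw : w ∉ C := (Finset.mem_sdiff.1 (Finset.mem_product.1 hx).1).2
    have hwC : insert w C = insert w' C := by rw [← (hsplit hx).1, heq, (hsplit hx').1]
    have hYY' : Y = Y' := by rw [← (hsplit hx).2, heq, (hsplit hx').2]
    rw [(Finset.insert_inj hw).1 hwC, hYY']

theorem IsFlowerBase.add_two_le_card_union (h : IsFlowerBase k j K C) (h' : IsFlowerBase k j K' C')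
    (hne : K' ≠ K) (hK' : K' ∉ rivals k K C) {w w' : V} (hw : w ∈ K \ C) (hw' : w' ∈ K' \ C') :
    j + 2 ≤ (insert w C ∪ insert w' C').card := by
  have hcard : (insert w C).card = j + 1 := by
    rw [Finset.card_insert_of_notMem (Finset.mem_sdiff.1 hw).2, h.card_centre]
  have hcard' : (insert w' C').card = j + 1 := by
    rw [Finset.card_insert_of_notMem (Finset.mem_sdiff.1 hw').2, h'.card_centre]
  have hpetals : ¬ insert w' C' ⊆ insert w C := fun hsub => by
    have heq := Finset.eq_of_subset_of_card_le hsub (hcard.trans hcard'.symm).le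
    refine hK' (mem_rivals.2 ⟨h'.card_simplex, hne, _, ⟨w, hw, rfl⟩, ?_⟩)
    rw [← heq]
    exact Finset.insert_subset (Finset.mem_sdiff.1 hw').1 h'.subset
  rw [← Finset.card_inter_add_card_sdiff (_ ∪ _) (insert w C), Finset.union_inter_cancel_left,
    Finset.union_sdiff_left, hcard]
  have := Finset.card_pos.2 (Finset.sdiff_nonempty.2 hpetals)
  omega

/-- A common rival contains a petal from each flower; these petals differ, so it contains at least
`j + 2` prescribed vertices. -/
theorem IsFlowerBase.card_rivals_inter_le (h : IsFlowerBase k j K C) (h' : IsFlowerBase k j K' C')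
    (hjk : j < k) (hne : K' ≠ K) (hK' : K' ∉ rivals k K C) :
    (rivals k K C ∩ rivals k K' C').card
      ≤ (k - j + 1) ^ 2 * Fintype.card V ^ (k - j - 1) := by
  have hsub : rivals k K C ∩ rivals k K' C' ⊆ ((K \ C) ×ˢ (K' \ C')).biUnion fun w =>
      Finset.univ.filter fun S => S.card = k + 1 ∧ insert w.1 C ∪ insert w.2 C' ⊆ S := by
    intro S hS
    obtain ⟨hSK, hSK'⟩ := Finset.mem_inter.1 hS
    obtain ⟨hScard, -, _, ⟨w, hw, rfl⟩, hP⟩ := mem_rivals.1 hSK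
    obtain ⟨-, -, _, ⟨w', hw', rfl⟩, hP'⟩ := mem_rivals.1 hSK'
    exact Finset.mem_biUnion.2 ⟨(w, w'), Finset.mem_product.2 ⟨hw, hw'⟩,
      Finset.mem_filter.2 ⟨Finset.mem_univ _, hScard, Finset.union_subset hP hP'⟩⟩
  calc (rivals k K C ∩ rivals k K' C').card
      ≤ ((K \ C) ×ˢ (K' \ C')).card * Fintype.card V ^ (k - j - 1) := by
        refine (Finset.card_le_card hsub).trans (Finset.card_biUnion_le_card_mul _ _ _ ?_)
        rintro ⟨w, w'⟩ hww'
        obtain ⟨hw, hw'⟩ := Finset.mem_product.1 hww'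
        obtain ⟨Q, hQ, hQcard⟩ := Finset.exists_subset_card_eq
          (h.add_two_le_card_union h' hne hK' hw hw')
        refine (Finset.card_le_card fun S hS => ?_).trans ((card_filter_superset_le Q
          (by omega : k + 1 = Q.card + (k - j - 1))).trans (Nat.choose_le_pow _ _))
        rw [Finset.mem_filter] at hS ⊢
        exact ⟨hS.1, hS.2.1, hQ.trans hS.2.2⟩
    _ = (k - j + 1) ^ 2 * Fintype.card V ^ (k - j - 1) := by
        rw [Finset.card_product, h.card_sdiff, h'.card_sdiff, Nat.sub_add_comm hjk.le, pow_two]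

end Counting

/-! ### Independent birth times -/

section ProductMeasure

variable {ι α : Type*} [Fintype ι] [MeasurableSpace α] (μ : Measure α) [IsProbabilityMeasure μ]

theorem measureReal_pi_forall_mem (s : Finset ι) (A : ι → Set α) :
    (Measure.pi fun _ => μ).real {t | ∀ i ∈ s, t i ∈ A i} = ∏ i ∈ s, μ.real (A i) := by
  rw [measureReal_def, show {t : ι → α | ∀ i ∈ s, t i ∈ A i} = (s : Set ι).pi A from rfl,
    Measure.pi_pi_finset, ENNReal.toReal_prod]
  rfl

theorem measureReal_pi_forall_mem_and {s u : Finset ι} (hsu : Disjoint s u)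
    (A B : Set α) :
    (Measure.pi fun _ => μ).real {t | (∀ i ∈ s, t i ∈ A) ∧ ∀ i ∈ u, t i ∈ B}
      = μ.real A ^ s.card * μ.real B ^ u.card := by
  have hbox : {t : ι → α | (∀ i ∈ s, t i ∈ A) ∧ ∀ i ∈ u, t i ∈ B}
      = {t | ∀ i ∈ s ∪ u, t i ∈ if i ∈ s then A else B} := by
    ext t
    simp only [Set.mem_ofPred_eq, Finset.mem_union, or_imp, forall_and]
    refine and_congr (forall₂_congr fun i hi => by rw [if_pos hi])
      (forall₂_congr fun i hi => by rw [if_neg (Finset.disjoint_right.1 hsu hi)])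
  rw [hbox, measureReal_pi_forall_mem, Finset.prod_union hsu]
  congr 1
  · exact Finset.prod_eq_pow_card fun i hi => by rw [if_pos hi]
  · exact Finset.prod_eq_pow_card fun i hi => by rw [if_neg (Finset.disjoint_right.1 hsu hi)]

end ProductMeasure

section SecondMoment

variable {Ω ι : Type*} [MeasurableSpace Ω] {μ : Measure Ω} [IsProbabilityMeasure μ]

theorem covariance_indicator_one {A B : Set Ω} (hA : MeasurableSet A) (hB : MeasurableSet B) :
    ProbabilityTheory.covariance (A.indicator 1) (B.indicator 1) μ
      = μ.real (A ∩ B) - μ.real A * μ.real B := by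
  have hmemLp {E : Set Ω} (hE : MeasurableSet E) : MemLp (E.indicator (1 : Ω → ℝ)) 2 μ :=
    (memLp_const 1).indicator hE
  rw [ProbabilityTheory.covariance_eq_sub (hmemLp hA) (hmemLp hB), ← Set.inter_indicator_one,
    integral_indicator_one hA, integral_indicator_one hB, integral_indicator_one (hA.inter hB)]

variable {I : Finset ι} {E : ι → Set Ω} {η : ℝ}

theorem variance_sum_indicator_one_le (hE : ∀ i ∈ I, MeasurableSet (E i)) (hη : 0 ≤ η)
    (hpair : ∀ i ∈ I, ∀ i' ∈ I, i ≠ i' →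
      μ.real (E i ∩ E i') ≤ (1 + η) * (μ.real (E i) * μ.real (E i'))) :
    ProbabilityTheory.variance (∑ i ∈ I, (E i).indicator 1) μ
      ≤ ∑ i ∈ I, μ.real (E i) + η * (∑ i ∈ I, μ.real (E i)) ^ 2 := by
  have hcov {i i'} (hi : i ∈ I) (hi' : i' ∈ I) :
      ProbabilityTheory.covariance ((E i).indicator 1) ((E i').indicator 1) μ
        ≤ (if i = i' then μ.real (E i) else 0) + η * (μ.real (E i) * μ.real (E i')) := by
    have hprod : 0 ≤ μ.real (E i) * μ.real (E i') := by positivity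
    rw [covariance_indicator_one (hE i hi) (hE i' hi')]
    split_ifs with h
    · subst h
      rw [Set.inter_self]
      linarith [mul_nonneg hη hprod]
    · linarith [hpair i hi i' hi' h]
  rw [ProbabilityTheory.variance_sum' fun i hi =>
    (memLp_const (1 : ℝ)).indicator (f := (1 : Ω → ℝ)) (hE i hi)]
  refine (Finset.sum_le_sum fun i hi => Finset.sum_le_sum fun i' hi' => hcov hi hi').trans_eq ?_
  simp_rw [Finset.sum_add_distrib, Finset.sum_ite_eq, sq, Finset.sum_mul_sum, Finset.mul_sum]
  congr 1
  exact Finset.sum_congr rfl fun i hi => if_pos hi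

theorem measureReal_card_filter_lt_le (hE : ∀ i ∈ I, MeasurableSet (E i)) (hη : 0 ≤ η)
    (hpair : ∀ i ∈ I, ∀ i' ∈ I, i ≠ i' →
      μ.real (E i ∩ E i') ≤ (1 + η) * (μ.real (E i) * μ.real (E i')))
    (hpos : 0 < ∑ i ∈ I, μ.real (E i)) :
    μ.real {ω | ((I.filter fun i => ω ∈ E i).card : ℝ) < (∑ i ∈ I, μ.real (E i)) / 2}
      ≤ 4 / (∑ i ∈ I, μ.real (E i)) + 4 * η := by
  set X : Ω → ℝ := ∑ i ∈ I, (E i).indicator 1 with hX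
  set M := ∑ i ∈ I, μ.real (E i)
  have hXcard (ω : Ω) : X ω = (I.filter fun i => ω ∈ E i).card := by
    simp [hX, Set.indicator_apply]
  have hmemLp : MemLp X 2 μ :=
    memLp_finsetSum' _ fun i hi => (memLp_const 1).indicator (hE i hi)
  have hmean : ∫ ω, X ω ∂μ = M := by
    simp only [hX, Finset.sum_apply]
    rw [integral_finsetSum _ fun i hi => (integrable_const 1).indicator (hE i hi)]
    exact Finset.sum_congr rfl fun i hi => integral_indicator_one (hE i hi)
  have hdev : {ω | ((I.filter fun i => ω ∈ E i).card : ℝ) < M / 2}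
      ⊆ {ω | M / 2 ≤ |X ω - ∫ ω, X ω ∂μ|} := fun ω hω => by
    rw [Set.mem_ofPred_eq, ← hXcard] at hω
    rw [Set.mem_ofPred_eq, hmean, abs_sub_comm]
    exact le_abs.2 (Or.inl (by linarith))
  calc _ ≤ (ENNReal.ofReal (ProbabilityTheory.variance X μ / (M / 2) ^ 2)).toReal :=
        ENNReal.toReal_mono ENNReal.ofReal_ne_top ((measure_mono hdev).trans
          (ProbabilityTheory.meas_ge_le_variance_div_sq hmemLp (half_pos hpos)))
    _ = ProbabilityTheory.variance X μ / (M / 2) ^ 2 :=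
        ENNReal.toReal_ofReal (div_nonneg (ProbabilityTheory.variance_nonneg _ _) (sq_nonneg _))
    _ ≤ (M + η * M ^ 2) / (M / 2) ^ 2 := by
        gcongr
        exact variance_sum_indicator_one_le hE hη hpair
    _ = 4 / M + 4 * η := by field_simp; norm_num

end SecondMoment

/-- The law of a single birth time. -/
noncomputable abbrev birthLaw : Measure ℝ := volume.restrict (Set.Icc 0 1)

instance : IsProbabilityMeasure birthLaw := ⟨by simp [birthLaw]⟩

instance (n : ℕ) : IsProbabilityMeasure (birthMeasure n) :=
  inferInstanceAs (IsProbabilityMeasure (Measure.pi fun _ => birthLaw))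

theorem birthLaw_real_Ioi {b : ℝ} (hb : b ∈ Set.Icc (0 : ℝ) 1) :
    birthLaw.real (Set.Ioi b) = 1 - b := by
  have hinter : Set.Ioi b ∩ Set.Icc 0 1 = Set.Ioc b 1 := by
    ext x
    have := hb.1
    simp only [Set.mem_inter_iff, Set.mem_Ioi, Set.mem_Icc, Set.mem_Ioc]
    grind
  rw [measureReal_restrict_apply measurableSet_Ioi, hinter, Real.volume_real_Ioc_of_le hb.2]

theorem birthLaw_real_Iic {a : ℝ} (ha : a ∈ Set.Icc (0 : ℝ) 1) :
    birthLaw.real (Set.Iic a) = a := by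
  rw [← Set.compl_Ioi, probReal_compl_eq_one_sub measurableSet_Ioi, birthLaw_real_Ioi ha,
    sub_sub_cancel]

theorem birthLaw_real_Ioc_le {x y : ℝ} (hxy : x ≤ y) : birthLaw.real (Set.Ioc x y) ≤ y - x :=
  (measureReal_restrict_apply measurableSet_Ioc).trans_le
    ((measureReal_mono Set.inter_subset_left measure_Ioc_lt_top.ne).trans_eq
      (Real.volume_real_Ioc_of_le hxy))

section IsolatedSimplices

variable {n j k : ℕ} {K C K' C' : Finset (Fin n)} {a b : ℝ}

theorem notMem_rivals_self : K ∉ rivals k K C := fun h => (mem_rivals.1 h).2.1 rfl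

theorem measureReal_mem_and_forall_rivals (hb : b ∈ Set.Icc (0 : ℝ) 1) (A : Set ℝ) :
    (birthMeasure n).real {t | t K ∈ A ∧ ∀ S ∈ rivals k K C, b < t S}
      = birthLaw.real A * (1 - b) ^ (rivals k K C).card := by
  have h := measureReal_pi_forall_mem_and birthLaw
    (Finset.disjoint_singleton_left.2 (notMem_rivals_self (k := k) (K := K) (C := C)))
    A (Set.Ioi b)
  simpa only [birthMeasure, Finset.mem_singleton, forall_eq, Finset.card_singleton, pow_one,
    Set.mem_Ioi, birthLaw_real_Ioi hb] using h

theorem measureReal_isIsolated (ha : a ∈ Set.Icc (0 : ℝ) 1) (hb : b ∈ Set.Icc (0 : ℝ) 1) :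
    (birthMeasure n).real {t | IsIsolated k t a b K C} = a * (1 - b) ^ (rivals k K C).card :=
  (measureReal_mem_and_forall_rivals hb (Set.Iic a)).trans (by rw [birthLaw_real_Iic ha])

theorem measurableSet_isIsolated : MeasurableSet {t | IsIsolated k t a b K C} := by
  unfold IsIsolated
  measurability

theorem one_le_one_add_mul_one_sub_pow {v d : ℕ} (hb : b ∈ Set.Icc (0 : ℝ) 1) (hv : v ≤ d)
    (hbd : b * d ≤ 1 / 2) : 1 ≤ (1 + 2 * (b * d)) * (1 - b) ^ v := by
  have hbd0 : 0 ≤ b * d := mul_nonneg hb.1 d.cast_nonneg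
  have hpow : 1 - b * d ≤ (1 - b) ^ v := by
    have hbernoulli := one_add_mul_le_pow (a := -b) (by linarith [hb.2]) d
    rw [← sub_eq_add_neg] at hbernoulli
    calc 1 - b * d ≤ (1 - b) ^ d := by linarith
      _ ≤ (1 - b) ^ v := pow_le_pow_of_le_one (by linarith [hb.2]) (by linarith [hb.1]) hv
  calc (1 : ℝ) ≤ (1 + 2 * (b * d)) * (1 - b * d) := by nlinarith
    _ ≤ _ := by gcongr

theorem isIsolated_inter_eq_empty (hab : a ≤ b)
    (hrival : K' ∈ rivals k K C ∨ K ∈ rivals k K' C') :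
    {t | IsIsolated k t a b K C} ∩ {t | IsIsolated k t a b K' C'} = ∅ := by
  refine Set.eq_empty_iff_forall_notMem.2 fun t ht => ?_
  rcases hrival with hmem | hmem
  · exact ((ht.1.2 _ hmem).trans_le (ht.2.1.trans hab)).false
  · exact ((ht.2.2 _ hmem).trans_le (ht.1.1.trans hab)).false

theorem measureReal_isIsolated_inter (ha : a ∈ Set.Icc (0 : ℝ) 1) (hb : b ∈ Set.Icc (0 : ℝ) 1)
    (hne : K ≠ K') (hK' : K' ∉ rivals k K C) (hK : K ∉ rivals k K' C') :
    (birthMeasure n).real ({t | IsIsolated k t a b K C} ∩ {t | IsIsolated k t a b K' C'})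
      = a ^ 2 * (1 - b) ^ (rivals k K C ∪ rivals k K' C').card := by
  have hinter : {t | IsIsolated k t a b K C} ∩ {t | IsIsolated k t a b K' C'}
      = {t | (∀ S ∈ ({K, K'} : Finset (Finset (Fin n))), t S ∈ Set.Iic a)
        ∧ ∀ S ∈ rivals k K C ∪ rivals k K' C', t S ∈ Set.Ioi b} := by
    ext t
    simp only [IsIsolated, Set.mem_inter_iff, Set.mem_ofPred_eq, Finset.mem_insert,
      Finset.mem_singleton, forall_eq, Finset.mem_union, or_imp, forall_and,
      Set.mem_Iic, Set.mem_Ioi]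
    tauto
  have hdisj : Disjoint ({K, K'} : Finset (Finset (Fin n))) (rivals k K C ∪ rivals k K' C') := by
    simp [hK, hK', notMem_rivals_self]
  rw [hinter, birthMeasure, measureReal_pi_forall_mem_and birthLaw hdisj, Finset.card_pair hne,
    birthLaw_real_Iic ha, birthLaw_real_Ioi hb]

/-- Two isolation events are incompatible if one simplex rivals the other, and otherwise are
positively correlated only through their few common rivals. -/
theorem IsFlowerBase.measureReal_isIsolated_inter_le (h : IsFlowerBase k j K C)
    (h' : IsFlowerBase k j K' C') (hjk : j < k) (hne : K ≠ K') (ha : 0 ≤ a) (hab : a ≤ b)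
    (hb : b ≤ 1) (hsmall : b * ((k - j + 1) ^ 2 * n ^ (k - j - 1) : ℕ) ≤ 1 / 2) :
    (birthMeasure n).real ({t | IsIsolated k t a b K C} ∩ {t | IsIsolated k t a b K' C'})
      ≤ (1 + 2 * (b * ((k - j + 1) ^ 2 * n ^ (k - j - 1) : ℕ)))
        * ((birthMeasure n).real {t | IsIsolated k t a b K C}
          * (birthMeasure n).real {t | IsIsolated k t a b K' C'}) := by
  have ha01 : a ∈ Set.Icc (0 : ℝ) 1 := ⟨ha, hab.trans hb⟩
  have hb01 : b ∈ Set.Icc (0 : ℝ) 1 := ⟨ha.trans hab, hb⟩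
  have : 0 ≤ 1 - b := sub_nonneg.2 hb
  by_cases hrival : K' ∈ rivals k K C ∨ K ∈ rivals k K' C'
  · rw [isIsolated_inter_eq_empty hab hrival, measureReal_empty]
    have := hb01.1
    positivity
  rw [not_or] at hrival
  set N := (rivals k K C ∪ rivals k K' C').card
  have hcommon := one_le_one_add_mul_one_sub_pow hb01
    (h.card_rivals_inter_le h' hjk hne.symm hrival.1) (by rwa [Fintype.card_fin])
  rw [Fintype.card_fin] at hcommon
  rw [measureReal_isIsolated_inter ha01 hb01 hne hrival.1 hrival.2,
    measureReal_isIsolated ha01 hb01, measureReal_isIsolated ha01 hb01, mul_mul_mul_comm a,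
    ← pow_add, ← Finset.card_union_add_card_inter, pow_add]
  calc a ^ 2 * (1 - b) ^ N ≤ _ * (a ^ 2 * (1 - b) ^ N) :=
        le_mul_of_one_le_left (by positivity) hcommon
    _ = _ := by ring

/-- The `k`-simplices `K` that are isolated with respect to a prescribed centre `centre K`. -/
noncomputable def isolatedSimplices (k : ℕ) (centre : Finset (Fin n) → Finset (Fin n)) (a b : ℝ)
    (t : Finset (Fin n) → ℝ) : Finset (Finset (Fin n)) :=
  (Finset.univ.powersetCard (k + 1)).filter fun K => IsIsolated k t a b K (centre K)

theorem exists_centre (n : ℕ) (hj : j ≤ k + 1) : ∃ centre : Finset (Fin n) → Finset (Fin n),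
    ∀ K : Finset (Fin n), K.card = k + 1 → IsFlowerBase k j K (centre K) := by
  have hexists (K : Finset (Fin n)) : ∃ C, K.card = k + 1 → IsFlowerBase k j K C := by
    by_cases hK : K.card = k + 1
    · obtain ⟨C, hCK, hC⟩ := Finset.exists_subset_card_eq (hj.trans_eq hK.symm)
      exact ⟨C, fun _ => ⟨hK, hC, hCK⟩⟩
    · exact ⟨∅, fun h => absurd h hK⟩
  exact ⟨_, fun K => (hexists K).choose_spec⟩

theorem measureReal_card_isolatedSimplices_lt_le (hjk : j < k)
    {centre : Finset (Fin n) → Finset (Fin n)}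
    (hcentre : ∀ K : Finset (Fin n), K.card = k + 1 → IsFlowerBase k j K (centre K))
    (ha : 0 ≤ a) (hab : a ≤ b) (hb : b ≤ 1)
    (hsmall : b * ((k - j + 1) ^ 2 * n ^ (k - j - 1) : ℕ) ≤ 1 / 2) {g : ℝ} (hg : 0 < g)
    (hmean : g ≤ n.choose (k + 1) * (a * (1 - b) ^ ((k - j + 1) * n.choose (k - j)))) :
    (birthMeasure n).real {t | ((isolatedSimplices k centre a b t).card : ℝ) < g / 2}
      ≤ 4 / g + 8 * (b * ((k - j + 1) ^ 2 * n ^ (k - j - 1) : ℕ)) := by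
  have hb0 : 0 ≤ b := ha.trans hab
  set I := (Finset.univ : Finset (Fin n)).powersetCard (k + 1) with hI
  set E : Finset (Fin n) → Set (Finset (Fin n) → ℝ) :=
    fun K => {t | IsIsolated k t a b K (centre K)}
  have hbase {K} (hK : K ∈ I) := hcentre K (Finset.mem_powersetCard.1 hK).2
  have hgM : g ≤ ∑ K ∈ I, (birthMeasure n).real (E K) := by
    refine hmean.trans ?_
    rw [show n.choose (k + 1) = I.card by simp [hI], ← nsmul_eq_mul]
    refine Finset.card_nsmul_le_sum _ _ _ fun K hK => ?_
    rw [measureReal_isIsolated ⟨ha, hab.trans hb⟩ ⟨hb0, hb⟩]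
    refine mul_le_mul_of_nonneg_left (pow_le_pow_of_le_one (by linarith) (by linarith) ?_) ha
    simpa using (hbase hK).card_rivals_le hjk.le
  have hcheb := measureReal_card_filter_lt_le (fun K _ => measurableSet_isIsolated)
    (by positivity) (fun K hK K' hK' hne =>
      (hbase hK).measureReal_isIsolated_inter_le (hbase hK') hjk hne ha hab hb hsmall)
    (hg.trans_le hgM)
  have hsub : {t | ((isolatedSimplices k centre a b t).card : ℝ) < g / 2} ⊆
      {t | ((I.filter fun K => t ∈ E K).card : ℝ) < (∑ K ∈ I, (birthMeasure n).real (E K)) / 2} :=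
    fun t (ht : ((isolatedSimplices k centre a b t).card : ℝ) < g / 2) =>
      ht.trans_le (by linarith)
  calc _ ≤ _ := measureReal_mono hsub
    _ ≤ _ := hcheb
    _ ≤ _ := by
      have : 4 / (∑ K ∈ I, (birthMeasure n).real (E K)) ≤ 4 / g := by gcongr
      linarith

end IsolatedSimplices

section UnionBound

variable {n j k : ℕ}

theorem measureReal_exists_isFlowerBase_le [Fintype V] {Ω : Type*} [MeasurableSpace Ω]
    (μ : Measure Ω) [IsFiniteMeasure μ] (E : Finset V → Finset V → Set Ω) {c : ℝ} (hc : 0 ≤ c)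
    (hE : ∀ K C, IsFlowerBase k j K C → μ.real (E K C) ≤ c) :
    μ.real {ω | ∃ K C, IsFlowerBase k j K C ∧ ω ∈ E K C}
      ≤ 2 ^ (k + 1) * Fintype.card V ^ (k + 1) * c := by
  set bases := Finset.univ.filter fun KC : Finset V × Finset V => IsFlowerBase k j KC.1 KC.2
  have hsub : {ω | ∃ K C, IsFlowerBase k j K C ∧ ω ∈ E K C} ⊆ ⋃ KC ∈ bases, E KC.1 KC.2 := by
    rintro ω ⟨K, C, hKC, hω⟩
    exact Set.mem_biUnion (x := (K, C)) (by simpa [bases] using hKC) hω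
  calc _ ≤ μ.real (⋃ KC ∈ bases, E KC.1 KC.2) :=
        measureReal_mono hsub (measure_ne_top _ _)
    _ ≤ ∑ KC ∈ bases, μ.real (E KC.1 KC.2) := measureReal_biUnion_finset_le _ _
    _ ≤ bases.card • c := Finset.sum_le_card_nsmul _ _ _ fun KC hKC =>
        hE KC.1 KC.2 (Finset.mem_filter.1 hKC).2
    _ ≤ _ := by
        rw [nsmul_eq_mul]
        gcongr
        exact_mod_cast card_isFlowerBase_le k j

theorem measureReal_exists_birth_le (hjk : j < k) {x y z : ℝ} (hxy : x ≤ y)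
    (hz : z ∈ Set.Icc (0 : ℝ) 1) :
    (birthMeasure n).real {t | ∃ K C, IsFlowerBase k j K C ∧
      t K ∈ Set.Ioc x y ∧ ∀ S ∈ rivals k K C, z < t S}
      ≤ 2 ^ (k + 1) * n ^ (k + 1)
        * ((y - x) * (1 - z) ^ ((k - j + 1) * (n - (k + 1)).choose (k - j))) := by
  have hz' : 0 ≤ 1 - z := sub_nonneg.2 hz.2
  have hxy' : 0 ≤ y - x := sub_nonneg.2 hxy
  have h := measureReal_exists_isFlowerBase_le (k := k) (j := j) (birthMeasure n)
    (fun K C => {t | t K ∈ Set.Ioc x y ∧ ∀ S ∈ rivals k K C, z < t S})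
    (mul_nonneg hxy' (pow_nonneg hz' ((k - j + 1) * (n - (k + 1)).choose (k - j))))
    fun K C hKC => by
      rw [measureReal_mem_and_forall_rivals hz]
      refine mul_le_mul (birthLaw_real_Ioc_le hxy)
        (pow_le_pow_of_le_one hz' (by linarith [hz.1]) ?_) (by positivity) hxy'
      simpa using hKC.le_card_rivals hjk
  simpa using h

end UnionBound

section Shells

/-- The sets `Q a ∪ {a} ∪ Y` with an apex `a ∈ A` and a filling `Y ⊆ B` of size `m`. -/
noncomputable def conesOver [DecidableEq V] (A B : Finset V) (m : ℕ) (Q : A → Finset V) :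
    Finset (Finset V) :=
  ((Finset.univ : Finset A) ×ˢ B.powersetCard m).image fun aY => insert (aY.1 : V) (Q aY.1) ∪ aY.2

variable {A B P : Finset V}

theorem card_conesOver [DecidableEq V] (hAB : Disjoint A B) {Q : A → Finset V}
    (hQA : ∀ a, Disjoint (Q a) A) (hQB : ∀ a, Disjoint (Q a) B) (m : ℕ) :
    (conesOver A B m Q).card = A.card * B.card.choose m := by
  have hmemA (a : A) {x} (hx : x ∈ A) : x ∉ Q a := Finset.disjoint_right.1 (hQA a) hx
  have hmemB (a : A) {x} (hx : x ∈ B) : x ∉ Q a := Finset.disjoint_right.1 (hQB a) hx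
  have hinterA (a : A) {Y} (hY : Y ⊆ B) : (insert (a : V) (Q a) ∪ Y) ∩ A = {(a : V)} := by
    ext x
    have hx : x ∈ Y → x ∉ A := fun hxY => Finset.disjoint_right.1 hAB (hY hxY)
    have := a.2
    grind
  have hinterB (a : A) {Y} (hY : Y ⊆ B) : (insert (a : V) (Q a) ∪ Y) ∩ B = Y := by
    ext x
    have := Finset.disjoint_left.1 hAB a.2
    have hx : x ∈ Y → x ∈ B := fun hxY => hY hxY
    grind
  rw [conesOver, Finset.card_image_of_injOn, Finset.card_product, Finset.card_univ,
    Fintype.card_coe, Finset.card_powersetCard]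
  rintro ⟨a, Y⟩ haY ⟨a', Y'⟩ haY' heq
  have hY : Y ⊆ B := (Finset.mem_powersetCard.1 (Finset.mem_product.1 haY).2).1
  have hY' : Y' ⊆ B := (Finset.mem_powersetCard.1 (Finset.mem_product.1 haY').2).1
  dsimp only at heq
  have ha : ({(a : V)} : Finset V) = {(a' : V)} := by rw [← hinterA a hY, heq, hinterA a' hY']
  exact Prod.ext (Subtype.ext (Finset.singleton_injective ha))
    (by rw [← hinterB a hY, heq, hinterB a' hY'])

variable {n j k : ℕ} {s : ℝ}

theorem lt_of_mem_conesOver {A B P : Finset (Fin n)} {t : Finset (Fin n) → ℝ} (hjk : j < k)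
    (hAB : Disjoint A B) (hPA : Disjoint P A) (hPB : Disjoint P B)
    {Q : A → Finset (Fin n)} (hQ : ∀ a, Q a ∈ P.powersetCard j)
    (hmissing : ∀ a : A, insert (a : Fin n) (Q a) ∉ complexAt k n t s) :
    ∀ S ∈ conesOver A B (k - j) Q, s < t S := by
  intro S hS
  obtain ⟨⟨a, Y⟩, haY, rfl⟩ := Finset.mem_image.1 hS
  obtain ⟨hYB, hY⟩ := Finset.mem_powersetCard.1 (Finset.mem_product.1 haY).2
  obtain ⟨hQP, hQcard⟩ := Finset.mem_powersetCard.1 (hQ a)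
  have hdisj : Disjoint (insert (a : Fin n) (Q a)) Y :=
    Finset.disjoint_of_subset_right hYB (Finset.disjoint_insert_left.2
      ⟨Finset.disjoint_left.1 hAB a.2, Finset.disjoint_of_subset_left hQP hPB⟩)
  have haQ : (a : Fin n) ∉ Q a := fun h => Finset.disjoint_right.1 hPA a.2 (hQP h)
  by_contra! hborn
  refine hmissing a (Or.inr ⟨Finset.insert_nonempty _ _, _, ?_, hborn, Finset.subset_union_left⟩)
  rw [Finset.card_union_of_disjoint hdisj, Finset.card_insert_of_notMem haQ, hQcard, hY]
  omega

theorem measureReal_forall_exists_notMem_le {A B P : Finset (Fin n)} (hjk : j < k)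
    (hAB : Disjoint A B) (hPA : Disjoint P A) (hPB : Disjoint P B) (hP : P.card = j + 1)
    (hs : s ∈ Set.Icc (0 : ℝ) 1) :
    (birthMeasure n).real {t | ∀ a ∈ A, ∃ Q ∈ P.powersetCard j, insert a Q ∉ complexAt k n t s}
      ≤ ((j + 1) * (1 - s) ^ (B.card.choose (k - j))) ^ A.card := by
  have hsub : {t | ∀ a ∈ A, ∃ Q ∈ P.powersetCard j, insert a Q ∉ complexAt k n t s} ⊆
      ⋃ Q ∈ (Finset.univ : Finset (A → P.powersetCard j)),
        {t | ∀ S ∈ conesOver A B (k - j) fun a => (Q a : Finset (Fin n)), t S ∈ Set.Ioi s} := by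
    intro t ht
    choose Q hQ hmissing using fun a : A => ht a a.2
    exact Set.mem_iUnion₂.2 ⟨fun a => ⟨Q a, hQ a⟩, Finset.mem_univ _,
      lt_of_mem_conesOver hjk hAB hPA hPB hQ hmissing⟩
  have hcones (Q : A → P.powersetCard j) :
      (birthMeasure n).real
        {t | ∀ S ∈ conesOver A B (k - j) fun a => (Q a : Finset (Fin n)), t S ∈ Set.Ioi s}
        = (1 - s) ^ (A.card * B.card.choose (k - j)) := by
    have hQP (a : A) : (Q a : Finset (Fin n)) ⊆ P := (Finset.mem_powersetCard.1 (Q a).2).1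
    rw [birthMeasure, measureReal_pi_forall_mem birthLaw, Finset.prod_const,
      birthLaw_real_Ioi hs, card_conesOver hAB
        (fun a => Finset.disjoint_of_subset_left (hQP a) hPA)
        (fun a => Finset.disjoint_of_subset_left (hQP a) hPB)]
  calc _ ≤ _ := measureReal_mono hsub (measure_ne_top _ _)
    _ ≤ _ := measureReal_biUnion_finset_le _ _
    _ = _ := by
      simp_rw [hcones]
      rw [Finset.sum_const, Finset.card_univ, Fintype.card_fun, Fintype.card_coe,
        Fintype.card_coe, Finset.card_powersetCard, hP, Nat.choose_succ_self_right,
        nsmul_eq_mul, mul_pow, ← pow_mul, mul_comm A.card]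
      push_cast
      rfl

theorem measureReal_not_extendsToShells_le (hjk : j < k) {α : ℕ} (hα : α ≤ n - (k + 1))
    (hs : s ∈ Set.Icc (0 : ℝ) 1) :
    (birthMeasure n).real {t | ¬ ExtendsToShells (complexAt k n t s) k j}
      ≤ 2 ^ (k + 1) * n ^ (k + 1)
        * ((j + 1) * (1 - s) ^ ((n - (k + 1) - α).choose (k - j))) ^ α := by
  have hs' : 0 ≤ 1 - s := sub_nonneg.2 hs.2
  have h := measureReal_exists_isFlowerBase_le (k := k) (j := j + 1) (birthMeasure n)
    (fun K P => {t | ∀ a ∉ K, ∃ Q ∈ P.powersetCard j, insert a Q ∉ complexAt k n t s})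
    (c := ((j + 1) * (1 - s) ^ ((n - (k + 1) - α).choose (k - j))) ^ α) (by positivity)
    fun K P hKP => by
      have hKc : (Finset.univ \ K).card = n - (k + 1) := by
        rw [Finset.card_sdiff_of_subset (Finset.subset_univ _), hKP.card_simplex]
        simp
      obtain ⟨A, hA, hAcard⟩ := Finset.exists_subset_card_eq (hα.trans_eq hKc.symm)
      have hKdisj : Disjoint P (Finset.univ \ K) :=
        Finset.disjoint_of_subset_left hKP.subset Finset.disjoint_sdiff
      have hbound := measureReal_forall_exists_notMem_le (B := (Finset.univ \ K) \ A) hjk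
        Finset.disjoint_sdiff (Finset.disjoint_of_subset_right hA hKdisj)
        (Finset.disjoint_of_subset_right Finset.sdiff_subset hKdisj) hKP.card_centre hs
      rw [Finset.card_sdiff_of_subset hA, hKc, hAcard] at hbound
      refine (measureReal_mono ?_).trans hbound
      exact fun t ht a ha => ht a (Finset.mem_sdiff.1 (hA ha)).2
  rw [Fintype.card_fin] at h
  refine (measureReal_mono fun t ht => ?_).trans h
  simp only [ExtendsToShells, Set.mem_ofPred_eq] at ht
  push Not at ht
  obtain ⟨K, P, hK, hPK, hP, hmissing⟩ := ht
  exact ⟨K, P, ⟨hK, hP, hPK⟩, hmissing⟩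

end Shells

/-! ### Asymptotics at the logarithmic scale -/

section HoldsWhp

variable {Ω : ℕ → Type*} [∀ n, MeasurableSpace (Ω n)] {μ : ∀ n, Measure (Ω n)}
  {P Q : ∀ n, Ω n → Prop}

/-- With high probability, expressed as vanishing of the (outer) measure of the complement, so
that no measurability is needed. -/
def HoldsWhp (μ : ∀ n, Measure (Ω n)) (P : ∀ n, Ω n → Prop) : Prop :=
  Tendsto (fun n => (μ n).real {ω | ¬ P n ω}) atTop (nhds 0)

theorem HoldsWhp.of_le {f : ℕ → ℝ} (hle : ∀ᶠ n in atTop, (μ n).real {ω | ¬ P n ω} ≤ f n)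
    (hf : Tendsto f atTop (nhds 0)) : HoldsWhp μ P :=
  squeeze_zero' (.of_forall fun _ => measureReal_nonneg) hle hf

variable [∀ n, IsProbabilityMeasure (μ n)]

theorem HoldsWhp.mono (h : HoldsWhp μ P) (hPQ : ∀ᶠ n in atTop, ∀ ω, P n ω → Q n ω) :
    HoldsWhp μ Q :=
  .of_le (hPQ.mono fun _ hn => measureReal_mono fun _ hQ hP => hQ (hn _ hP)) h

theorem HoldsWhp.and (hP : HoldsWhp μ P) (hQ : HoldsWhp μ Q) :
    HoldsWhp μ fun n ω => P n ω ∧ Q n ω := by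
  refine .of_le (.of_forall fun n => ?_) (by simpa using Tendsto.add hP hQ)
  refine (measureReal_mono fun ω hω => ?_).trans (measureReal_union_le _ _)
  exact not_and_or.1 hω

theorem HoldsWhp.tendsto_one (h : HoldsWhp μ P) :
    Tendsto (fun n => μ n {ω | P n ω}) atTop (nhds 1) := by
  have hreal : Tendsto (fun n => (μ n).real {ω | P n ω}) atTop (nhds 1) := by
    refine tendsto_of_tendsto_of_tendsto_of_le_of_le (by simpa using Tendsto.const_sub 1 h)
      tendsto_const_nhds (fun n => ?_) fun n => measureReal_le_one
    have hunion := measureReal_union_le (μ := μ n) {ω | P n ω} {ω | ¬ P n ω}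
    rw [show {ω | P n ω} ∪ {ω | ¬ P n ω} = Set.univ from Set.union_compl_self _,
      probReal_univ] at hunion
    exact sub_le_iff_le_add.2 hunion
  simpa [ofReal_measureReal] using ENNReal.tendsto_ofReal hreal

end HoldsWhp

section BirthScale

open Asymptotics

variable {m n k j : ℕ} {x : ℕ → ℝ}

/-- The unit of time in which rivals appear: for `m = k - j` it is the asymptotic inverse of the
number of rivals of a flower. -/
noncomputable def birthScale (m n : ℕ) : ℝ := m.factorial / ((m + 1) * n ^ m)

theorem birthScale_pos (hn : 0 < n) : 0 < birthScale m n := by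
  rw [birthScale]
  positivity

theorem birthScale_nonneg : 0 ≤ birthScale m n := by
  rw [birthScale]
  positivity

theorem half_pow_div_factorial_le_choose {n N r : ℕ} (h : n + 2 * r ≤ 2 * (N + 1)) :
    ((n : ℝ) / 2) ^ r / r.factorial ≤ N.choose r := by
  refine le_trans ?_ (Nat.pow_le_choose (α := ℝ) r N)
  gcongr
  rw [div_le_iff₀ two_pos]
  exact_mod_cast (by omega : n ≤ (N + 1 - r) * 2)

theorem pow_mul_birthScale (hjk : j < k) (hn : 0 < n) :
    (n : ℝ) ^ (k + 1) * birthScale (k - j) n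
      = (k - j).factorial / ((k - j : ℕ) + 1) * n ^ (j + 1) := by
  rw [birthScale, show k + 1 = (j + 1) + (k - j) by omega, pow_add]
  field_simp

theorem choose_mul_birthScale_le_one (hn : 0 < n) :
    (((m + 1) * n.choose m : ℕ) : ℝ) * birthScale m n ≤ 1 := by
  have h := Nat.choose_le_pow_div (α := ℝ) m n
  rw [le_div_iff₀ (by positivity)] at h
  rw [birthScale, ← mul_div_assoc, div_le_one (by positivity)]
  push_cast
  rw [mul_assoc]
  gcongr

theorem one_sub_div_le_choose_mul_birthScale (hn : k + 1 + m ≤ n) :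
    1 - m * (k + m) / n ≤ (((m + 1) * (n - (k + 1)).choose m : ℕ) : ℝ) * birthScale m n := by
  have hn0 : (0 : ℝ) < n := by exact_mod_cast (by omega : 0 < n)
  have hle : ((k : ℝ) + m) / n ≤ 1 := by
    rw [div_le_one hn0]
    exact_mod_cast (by omega : k + m ≤ n)
  have hbase : (((n - (k + 1) + 1 - m : ℕ) : ℝ)) / n = 1 + -((k + m) / n) := by
    rw [show n - (k + 1) + 1 - m = n - (k + m) by omega, Nat.cast_sub (by omega)]
    push_cast
    field_simp
    ring
  calc (1 : ℝ) - m * (k + m) / n = 1 + m * -((k + m) / n) := by ring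
    _ ≤ (1 + -((k + m) / n)) ^ m := one_add_mul_le_pow (by linarith) m
    _ = ((n - (k + 1) + 1 - m : ℕ) : ℝ) ^ m / m.factorial * (m.factorial / n ^ m) := by
      rw [← hbase, div_pow]
      field_simp
    _ ≤ (n - (k + 1)).choose m * (m.factorial / n ^ m) := by
      gcongr
      exact Nat.pow_le_choose m _
    _ = _ := by
      rw [birthScale]
      push_cast
      field_simp

theorem half_exp_neg_le_one_sub_pow {N : ℕ} {b x : ℝ} (hb : b ≤ 1 / 2)
    (hNb : N * b ≤ x) (hNb2 : N * b ^ 2 ≤ 1 / 4) : Real.exp (-x) / 2 ≤ (1 - b) ^ N := by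
  have hbpos : 0 < 1 - b := by linarith
  have hlog : -(b + 2 * b ^ 2) ≤ Real.log (1 - b) := by
    refine le_trans ?_ (Real.one_sub_inv_le_log_of_pos hbpos)
    rw [neg_le_sub_iff_le_add, inv_le_iff_one_le_mul₀ hbpos]
    nlinarith [mul_nonneg (sq_nonneg b) (sub_nonneg.2 hb)]
  have htwo : Real.exp (-x) / 2 = Real.exp (-x - Real.log 2) := by
    rw [Real.exp_sub, Real.exp_log two_pos]
  rw [htwo, ← Real.exp_log (pow_pos hbpos N), Real.exp_le_exp, Real.log_pow]
  have := mul_le_mul_of_nonneg_left hlog (Nat.cast_nonneg (α := ℝ) N)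
  linarith [Real.log_two_gt_d9]

theorem one_sub_pow_le_exp_neg_mul {N : ℕ} {b : ℝ} (hb : b ≤ 1) :
    (1 - b) ^ N ≤ Real.exp (-(N * b)) :=
  calc (1 - b) ^ N ≤ Real.exp (-b) ^ N :=
        pow_le_pow_left₀ (sub_nonneg.2 hb) (Real.one_sub_le_exp_neg b) N
    _ = Real.exp (-(N * b)) := by rw [← Real.exp_nat_mul, mul_neg]

theorem one_sub_pow_le_two_mul_exp_neg {N : ℕ} {b x : ℝ} (hb : b ≤ 1) (hNb : x - 1 / 2 ≤ N * b) :
    (1 - b) ^ N ≤ 2 * Real.exp (-x) :=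
  calc (1 - b) ^ N ≤ Real.exp (-(N * b)) := one_sub_pow_le_exp_neg_mul hb
    _ ≤ Real.exp (Real.log 2 + -x) := by
      rw [Real.exp_le_exp]
      linarith [Real.log_two_gt_d9]
    _ = _ := by rw [Real.exp_add, Real.exp_log two_pos]

theorem one_sub_pow_le_inv {N : ℕ} {b c : ℝ} (hb : b ≤ 1) (hc : 0 < c) (hNb : c ≤ N * b) :
    (1 - b) ^ N ≤ c⁻¹ :=
  calc (1 - b) ^ N ≤ Real.exp (-(N * b)) := one_sub_pow_le_exp_neg_mul hb
    _ = (Real.exp (N * b))⁻¹ := Real.exp_neg _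
    _ ≤ c⁻¹ := by
      gcongr
      linarith [Real.add_one_le_exp (N * b)]

theorem mul_exp_neg_mul_log {u : ℝ} (hu : 0 < u) (c : ℝ) :
    u * Real.exp (-(c * Real.log u)) = Real.exp ((1 - c) * Real.log u) := by
  rw [one_sub_mul, sub_eq_add_neg, Real.exp_add, Real.exp_log hu]

theorem pow_mul_exp_neg_mul_log {n : ℕ} (hn : 0 < n) (r : ℕ) (u : ℝ) :
    (n : ℝ) ^ r * Real.exp (-(r * Real.log n + u)) = Real.exp (-u) := by
  rw [neg_add, Real.exp_add, Real.exp_neg, Real.exp_nat_mul, Real.exp_log (by positivity)]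
  field_simp

theorem tendsto_log_natCast : Tendsto (fun n : ℕ => Real.log n) atTop atTop :=
  Real.tendsto_log_atTop.comp tendsto_natCast_atTop_atTop

theorem tendsto_log_log_natCast : Tendsto (fun n : ℕ => Real.log (Real.log n)) atTop atTop :=
  Real.tendsto_log_atTop.comp tendsto_log_natCast

theorem eventually_log_log_mem_Icc :
    ∀ᶠ n : ℕ in atTop, Real.log (Real.log n) ∈ Set.Icc 0 (Real.log n) := by
  filter_upwards [tendsto_log_log_natCast.eventually_ge_atTop 0,
    tendsto_log_natCast.eventually_ge_atTop 0] with n hll hl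
  exact ⟨hll, Real.log_le_self hl⟩

theorem isBigO_log_log : (fun n : ℕ => Real.log (Real.log n)) =O[atTop] fun n => Real.log n :=
  (Real.isLittleO_log_id_atTop.comp_tendsto tendsto_log_natCast).isBigO

theorem isBigO_const_log (c : ℝ) :
    (fun _ => c : ℕ → ℝ) =O[atTop] fun n => Real.log n :=
  (isLittleO_const_left.2 <| .inr <| tendsto_norm_atTop_atTop.comp tendsto_log_natCast).isBigO

theorem tendsto_pow_div_natCast (hx : x =O[atTop] fun n => Real.log n) (a : ℕ) :
    Tendsto (fun n => x n ^ a / n) atTop (nhds 0) := by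
  have hlog : (fun n : ℕ => Real.log n ^ a) =o[atTop] fun n : ℕ => (n : ℝ) :=
    Real.isLittleO_pow_log_id_atTop.comp_tendsto tendsto_natCast_atTop_atTop
  exact ((hx.pow a).trans_isLittleO hlog).tendsto_div_nhds_zero

theorem tendsto_pow_mul_birthScale (hx : x =O[atTop] fun n => Real.log n) (hm : 1 ≤ m) (a : ℕ) :
    Tendsto (fun n => x n ^ a * birthScale m n) atTop (nhds 0) := by
  have hlim : Tendsto (fun n => |x n ^ a / n| * m.factorial) atTop (nhds 0) := by
    simpa using (tendsto_pow_div_natCast hx a).abs.mul_const (m.factorial : ℝ)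
  refine squeeze_zero_norm' ?_ hlim
  filter_upwards [eventually_gt_atTop 0] with n hn
  have hn1 : (1 : ℝ) ≤ n := by exact_mod_cast hn
  have hscale : birthScale m n ≤ m.factorial / n := by
    rw [birthScale]
    gcongr
    exact (le_self_pow₀ hn1 (by omega)).trans
      (le_mul_of_one_le_left (by positivity) (by simp))
  calc ‖x n ^ a * birthScale m n‖ = |x n ^ a| * birthScale m n := by
        rw [Real.norm_eq_abs, abs_mul, abs_of_nonneg birthScale_nonneg]
    _ ≤ |x n ^ a| * (m.factorial / n) := by gcongr
    _ = _ := by rw [abs_div, Nat.abs_cast, div_mul_eq_mul_div, mul_div_assoc]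

theorem tendsto_mul_birthScale_mul_pow (hm : 1 ≤ m) (hx : x =O[atTop] fun n => Real.log n) :
    Tendsto (fun n => x n * birthScale m n * ((m + 1) ^ 2 * n ^ (m - 1) : ℕ)) atTop (nhds 0) := by
  have hlim : Tendsto (fun n => ((m + 1) * m.factorial : ℝ) * (x n ^ 1 / n)) atTop (nhds 0) := by
    simpa using (tendsto_pow_div_natCast hx 1).const_mul ((m + 1) * m.factorial : ℝ)
  refine hlim.congr' ?_
  filter_upwards [eventually_gt_atTop 0] with n hn
  obtain ⟨m, rfl⟩ := Nat.exists_eq_add_of_le' hm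
  rw [birthScale, Nat.add_sub_cancel, pow_succ (n : ℝ)]
  push_cast
  field_simp

theorem eventually_half_exp_neg_le_pow (hm : 1 ≤ m) (hx : x =O[atTop] fun n => Real.log n)
    (hx0 : ∀ᶠ n in atTop, 0 ≤ x n) : ∀ᶠ n in atTop,
      Real.exp (-x n) / 2 ≤ (1 - x n * birthScale m n) ^ ((m + 1) * n.choose m) := by
  filter_upwards [hx0, eventually_gt_atTop 0,
    (tendsto_pow_mul_birthScale hx hm 1).eventually_le_const one_half_pos,
    (tendsto_pow_mul_birthScale hx hm 2).eventually_le_const (show (0 : ℝ) < 1 / 4 by norm_num)]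
    with n hx0 hn hone htwo
  have hscale := birthScale_nonneg (m := m) (n := n)
  have hN := choose_mul_birthScale_le_one (m := m) hn
  rw [pow_one] at hone
  set N := (m + 1) * n.choose m
  refine half_exp_neg_le_one_sub_pow hone ?_ ?_
  · rw [mul_left_comm]
    exact mul_le_of_le_one_right hx0 hN
  · calc N * (x n * birthScale m n) ^ 2 = x n ^ 2 * birthScale m n * (N * birthScale m n) := by ring
      _ ≤ x n ^ 2 * birthScale m n := mul_le_of_le_one_right (by positivity) hN
      _ ≤ 1 / 4 := htwo

theorem eventually_pow_le_two_mul_exp_neg (k : ℕ) (hm : 1 ≤ m)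
    (hx : x =O[atTop] fun n => Real.log n) (hx0 : ∀ᶠ n in atTop, 0 ≤ x n) : ∀ᶠ n in atTop,
      (1 - x n * birthScale m n) ^ ((m + 1) * (n - (k + 1)).choose m)
        ≤ 2 * Real.exp (-x n) := by
  have herror : Tendsto (fun n => (m * (k + m) : ℝ) * (x n ^ 1 / n)) atTop (nhds 0) := by
    simpa using (tendsto_pow_div_natCast hx 1).const_mul (m * (k + m) : ℝ)
  filter_upwards [hx0, eventually_ge_atTop (k + 1 + m), herror.eventually_le_const one_half_pos,
    (tendsto_pow_mul_birthScale hx hm 1).eventually_le_const one_pos]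
    with n hx0 hn herror hone
  rw [pow_one] at herror hone
  refine one_sub_pow_le_two_mul_exp_neg hone ?_
  calc x n - 1 / 2 ≤ x n * (1 - m * (k + m) / n) := by linear_combination herror
    _ ≤ x n * _ := mul_le_mul_of_nonneg_left (one_sub_div_le_choose_mul_birthScale hn) hx0
    _ = _ := by ring

end BirthScale

section WithHighProbability

open Asymptotics

variable {k j : ℕ} {a x y z : ℕ → ℝ}

theorem exists_mul_exp_neg_le_expected_isolated (hjk : j < k) : ∃ κ > (0 : ℝ), ∀ {a x : ℕ → ℝ},
    (∀ᶠ n in atTop, 0 ≤ a n ∧ a n ≤ x n) → (x =O[atTop] fun n => Real.log n) →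
    ∀ᶠ n : ℕ in atTop, κ * (a n * n ^ (j + 1) * Real.exp (-x n)) ≤
      n.choose (k + 1) * (a n * birthScale (k - j) n *
        (1 - x n * birthScale (k - j) n) ^ ((k - j + 1) * n.choose (k - j))) := by
  refine ⟨(k - j).factorial / ((k - j : ℕ) + 1) / (2 ^ (k + 1) * (k + 1).factorial) / 2,
    by positivity, fun {a x} hax hx => ?_⟩
  filter_upwards [hax, eventually_ge_atTop (2 * (k + 1)),
    eventually_half_exp_neg_le_pow (by omega : 1 ≤ k - j) hx
      (hax.mono fun n h => h.1.trans h.2)] with n ⟨ha, _⟩ hn hpow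
  have hscale := birthScale_nonneg (m := k - j) (n := n)
  have hchoose : ((n : ℝ) / 2) ^ (k + 1) / (k + 1).factorial ≤ n.choose (k + 1) :=
    half_pow_div_factorial_le_choose (by omega)
  calc _ = (k - j).factorial / ((k - j : ℕ) + 1) * n ^ (j + 1)
          / (2 ^ (k + 1) * (k + 1).factorial) * (a n * (Real.exp (-x n) / 2)) := by ring
    _ = ((n : ℝ) / 2) ^ (k + 1) / (k + 1).factorial
          * (a n * birthScale (k - j) n * (Real.exp (-x n) / 2)) := by
      rw [← pow_mul_birthScale hjk (by omega), div_pow]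
      ring
    _ ≤ _ := by gcongr

theorem holdsWhp_lt_card_isolatedSimplices (hjk : j < k)
    {centre : ∀ n, Finset (Fin n) → Finset (Fin n)}
    (hcentre : ∀ n K, K.card = k + 1 → IsFlowerBase k j K (centre n K))
    (hax : ∀ᶠ n in atTop, 0 ≤ a n ∧ a n ≤ x n) (hx : x =O[atTop] fun n => Real.log n)
    {f : ℕ → ℝ} (hf : ∀ᶠ n in atTop, 1 ≤ f n)
    (hratio : Tendsto (fun n => a n * n ^ (j + 1) * Real.exp (-x n) / f n) atTop atTop) :
    HoldsWhp birthMeasure fun n t => f n <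
      (isolatedSimplices k (centre n) (a n * birthScale (k - j) n)
        (x n * birthScale (k - j) n) t).card := by
  have hm : 1 ≤ k - j := by omega
  obtain ⟨κ, hκ, hmean⟩ := exists_mul_exp_neg_le_expected_isolated hjk
  set g : ℕ → ℝ := fun n => κ * (a n * n ^ (j + 1) * Real.exp (-x n))
  have hgf : ∀ᶠ n in atTop, 4 * f n ≤ g n := by
    filter_upwards [hratio.eventually_ge_atTop (4 / κ), hf] with n hn hf
    rw [div_le_div_iff₀ hκ (by linarith)] at hn
    linarith
  have hg_top : Tendsto g atTop atTop := by
    refine tendsto_atTop_mono' _ ?_ (hratio.const_mul_atTop hκ)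
    filter_upwards [hratio.eventually_ge_atTop 0, hf] with n hn hf
    rw [le_div_iff₀ (by linarith), zero_mul] at hn
    exact mul_le_mul_of_nonneg_left (div_le_self hn hf) hκ.le
  have hsmall := tendsto_mul_birthScale_mul_pow hm hx
  refine .of_le (f := fun n => 4 / g n +
      8 * (x n * birthScale (k - j) n * ((k - j + 1) ^ 2 * n ^ (k - j - 1) : ℕ))) ?_
    (by simpa using (tendsto_const_nhds.div_atTop hg_top).add (hsmall.const_mul 8))
  have hone := (tendsto_pow_mul_birthScale hx hm 1).eventually_le_const one_pos
  filter_upwards [hax, hgf, hf, hmean hax hx, hone, hsmall.eventually_le_const one_half_pos]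
    with n ⟨ha, hax⟩ hgf hf hmean hone hsmall
  have hscale := birthScale_nonneg (m := k - j) (n := n)
  refine (measureReal_mono fun t ht => ?_).trans <| measureReal_card_isolatedSimplices_lt_le hjk
    (hcentre n) (by positivity) (by gcongr) (by simpa using hone) hsmall (by linarith) hmean
  exact (not_lt.1 ht).trans_lt (by linarith)

theorem holdsWhp_exists_isIsolated (hjk : j < k)
    (hax : ∀ᶠ n in atTop, 0 ≤ a n ∧ a n ≤ x n) (hx : x =O[atTop] fun n => Real.log n)
    (hmany : Tendsto (fun n => a n * n ^ (j + 1) * Real.exp (-x n)) atTop atTop) :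
    HoldsWhp birthMeasure fun n t => ∃ K C, IsFlowerBase k j K C ∧
      IsIsolated k t (a n * birthScale (k - j) n) (x n * birthScale (k - j) n) K C := by
  choose centre hcentre using fun n => exists_centre n (hjk.le.trans k.le_succ)
  refine (holdsWhp_lt_card_isolatedSimplices (f := fun _ => 1) hjk hcentre hax hx
    (.of_forall fun _ => le_rfl) (by simpa using hmany)).mono (.of_forall fun n t ht => ?_)
  obtain ⟨K, hK⟩ := Finset.card_pos.1 (zero_lt_one.trans (by exact_mod_cast ht))
  rw [isolatedSimplices, Finset.mem_filter, Finset.mem_powersetCard] at hK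
  exact ⟨K, centre n K, hcentre n K hK.1.2, hK.2⟩

theorem holdsWhp_forall_birth_notMem (hjk : j < k) (hxy : ∀ᶠ n in atTop, x n ≤ y n)
    (hz0 : ∀ᶠ n in atTop, 0 ≤ z n) (hz : z =O[atTop] fun n => Real.log n)
    (hfew : Tendsto (fun n => (y n - x n) * n ^ (j + 1) * Real.exp (-z n)) atTop (nhds 0)) :
    HoldsWhp birthMeasure fun n t => ∀ K C, IsFlowerBase k j K C →
      (∀ S ∈ rivals k K C, z n * birthScale (k - j) n < t S) →
      t K ∉ Set.Ioc (x n * birthScale (k - j) n) (y n * birthScale (k - j) n) := by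
  have hm : 1 ≤ k - j := by omega
  set c : ℝ := 2 ^ (k + 1) * (2 * ((k - j).factorial / ((k - j : ℕ) + 1))) with hc
  refine .of_le ?_ (by simpa using hfew.const_mul c)
  filter_upwards [hxy, hz0, eventually_gt_atTop 0, eventually_pow_le_two_mul_exp_neg k hm hz hz0,
    (tendsto_pow_mul_birthScale hz hm 1).eventually_le_const one_pos] with n hxy hz0 hn hpow hone
  have hscale := birthScale_nonneg (m := k - j) (n := n)
  have : 0 ≤ y n - x n := sub_nonneg.2 hxy
  rw [pow_one] at hone
  have hz_mem : z n * birthScale (k - j) n ∈ Set.Icc 0 1 := ⟨by positivity, hone⟩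
  refine (measureReal_mono fun t ht => ?_).trans <| (measureReal_exists_birth_le hjk
    (mul_le_mul_of_nonneg_right hxy hscale) hz_mem).trans ?_
  · simp only [Set.mem_ofPred_eq] at ht
    push Not at ht
    obtain ⟨K, C, hKC, hrivals, hmem⟩ := ht
    exact ⟨K, C, hKC, hmem, hrivals⟩
  calc _ ≤ 2 ^ (k + 1) * n ^ (k + 1) * ((y n * birthScale (k - j) n - x n * birthScale (k - j) n)
        * (2 * Real.exp (-z n))) := by
        rw [← sub_mul]
        gcongr
    _ = 2 ^ (k + 1) * 2 * (n ^ (k + 1) * birthScale (k - j) n) * (y n - x n)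
        * Real.exp (-z n) := by ring
    _ = _ := by
      rw [pow_mul_birthScale hjk hn, hc]
      ring

theorem eventually_mul_one_sub_pow_choose_le_half {m : ℕ} (hm : 1 ≤ m) (j k : ℕ) {Δ : ℝ}
    (hΔ : Δ = 2 ^ m * (m + 1) * (2 * (j + 1))) : ∀ᶠ n in atTop,
      (j + 1) * (1 - Δ * birthScale m n) ^ ((n - (k + 1) - n / 4).choose m) ≤ 1 / 2 := by
  filter_upwards [eventually_ge_atTop (4 * (k + 1 + m)), (tendsto_pow_mul_birthScale
    (isBigO_const_log Δ) hm 1).eventually_le_const one_pos] with n hn hone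
  rw [pow_one] at hone
  have hscale := birthScale_nonneg (m := m) (n := n)
  have hn0 : 0 < n := by omega
  have hmany : 2 * (j + 1) ≤ ((n - (k + 1) - n / 4).choose m) * (Δ * birthScale m n) :=
    calc (2 * (j + 1) : ℝ) = ((n : ℝ) / 2) ^ m / m.factorial * (Δ * birthScale m n) := by
          rw [hΔ, birthScale, div_pow]
          field_simp
      _ ≤ _ := by
        rw [hΔ]
        gcongr
        exact half_pow_div_factorial_le_choose (by omega)
  calc _ ≤ (j + 1) * (2 * (j + 1) : ℝ)⁻¹ := by
        gcongr
        exact one_sub_pow_le_inv hone (by positivity) hmany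
    _ = 1 / 2 := by field_simp

theorem tendsto_pow_mul_half_pow_div_four (c : ℝ) (r : ℕ) :
    Tendsto (fun n : ℕ => c * n ^ r * (1 / 2 : ℝ) ^ (n / 4)) atTop (nhds 0) := by
  have hquarter : Tendsto (fun n : ℕ => n / 4 + 1) atTop atTop :=
    (tendsto_add_atTop_nat 1).comp (Nat.tendsto_div_const_atTop (by norm_num))
  have hlim := ((tendsto_pow_const_mul_const_pow_of_abs_lt_one r (r := (1 / 2 : ℝ))
    (by rw [abs_of_pos] <;> norm_num)).comp hquarter).const_mul (|c| * 4 ^ r * 2)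
  rw [mul_zero] at hlim
  refine squeeze_zero_norm (fun n => ?_) hlim
  have hn : (n : ℝ) ≤ 4 * (n / 4 + 1 : ℕ) := mod_cast (show n ≤ 4 * (n / 4 + 1) by omega)
  calc ‖c * n ^ r * (1 / 2 : ℝ) ^ (n / 4)‖ = |c| * n ^ r * (1 / 2 : ℝ) ^ (n / 4) := by
        simp
    _ ≤ |c| * (4 * (n / 4 + 1 : ℕ)) ^ r * (1 / 2 : ℝ) ^ (n / 4) := by gcongr
    _ = _ := by
        simp only [Function.comp_apply, pow_succ, mul_pow]
        ring

theorem exists_holdsWhp_extendsToShells (hjk : j < k) : ∃ Δ > (0 : ℝ),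
    HoldsWhp birthMeasure fun n t =>
      ExtendsToShells (complexAt k n t (Δ * birthScale (k - j) n)) k j := by
  have hm : 1 ≤ k - j := by omega
  set Δ : ℝ := 2 ^ (k - j) * ((k - j : ℕ) + 1) * (2 * (j + 1)) with hΔ
  refine ⟨Δ, by positivity, .of_le ?_ (tendsto_pow_mul_half_pow_div_four (2 ^ (k + 1)) (k + 1))⟩
  filter_upwards [eventually_ge_atTop (4 * (k + 1)),
    eventually_mul_one_sub_pow_choose_le_half hm j k hΔ, (tendsto_pow_mul_birthScale
      (isBigO_const_log Δ) hm 1).eventually_le_const one_pos] with n hn hhalf hone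
  rw [pow_one] at hone
  have hscale := birthScale_nonneg (m := k - j) (n := n)
  have : 0 ≤ 1 - Δ * birthScale (k - j) n := sub_nonneg.2 hone
  calc _ ≤ _ := measureReal_not_extendsToShells_le (α := n / 4) hjk (by omega)
        ⟨by positivity, hone⟩
    _ ≤ _ := by gcongr

end WithHighProbability

/-! ### Critical windows -/

section CriticalWindows

open Asymptotics

variable {k j : ℕ} {c : ℝ}

/-- The time, in units of `birthScale (k - j) n`, at which `(log n) ^ (-c)` isolated simplices are
expected up to factors of order the time itself: `n ^ (j + 1) * exp (-x) = (log n) ^ (-c)`. -/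
noncomputable def criticalTime (j : ℕ) (c : ℝ) (n : ℕ) : ℝ :=
  (j + 1) * Real.log n + c * Real.log (Real.log n)

theorem pow_mul_exp_neg_criticalTime {n : ℕ} (hn : 0 < n) :
    (n : ℝ) ^ (j + 1) * Real.exp (-criticalTime j c n)
      = Real.exp (-(c * Real.log (Real.log n))) := by
  simpa [criticalTime] using pow_mul_exp_neg_mul_log hn (j + 1) (c * Real.log (Real.log n))

theorem isBigO_criticalTime (j : ℕ) (c : ℝ) :
    criticalTime j c =O[atTop] fun n => Real.log n :=
  ((isBigO_refl _ _).const_mul_left _).add (isBigO_log_log.const_mul_left c)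

theorem eventually_log_div_two_le_criticalTime (j : ℕ) (hc : -(1 / 2) ≤ c) :
    ∀ᶠ n : ℕ in atTop, Real.log n / 2 ≤ criticalTime j c n := by
  filter_upwards [eventually_log_log_mem_Icc] with n ⟨hll, hle⟩
  have hj : 0 ≤ j * Real.log n := mul_nonneg (Nat.cast_nonneg j) (hll.trans hle)
  have := mul_le_mul_of_nonneg_right hc hll
  rw [criticalTime]
  linarith

theorem pjPrevMinus_div_birthScale {n : ℕ} (hn : 0 < n) :
    pjPrevMinus k j n / birthScale (k - j) n = (1 - 1 / Real.sqrt (Real.log n)) *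
      (j * ((k - j : ℕ) + 1) ^ 2 / ((k - j : ℕ) + 2) * (Real.log n ^ 1 / n)) := by
  rw [pjPrevMinus, birthScale, Nat.factorial_succ]
  push_cast
  generalize 1 - 1 / Real.sqrt (Real.log n) = u
  field_simp
  ring

theorem tendsto_one_sub_one_div_sqrt_log :
    Tendsto (fun n : ℕ => 1 - 1 / Real.sqrt (Real.log n)) atTop (nhds 1) := by
  simpa using ((tendsto_const_nhds (x := (1 : ℝ))).div_atTop
    (Real.tendsto_sqrt_atTop.comp tendsto_log_natCast)).const_sub 1

theorem tendsto_pjPrevMinus_div_birthScale (k j : ℕ) :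
    Tendsto (fun n => pjPrevMinus k j n / birthScale (k - j) n) atTop (nhds 0) := by
  have hlog := tendsto_pow_div_natCast (isBigO_refl (fun n : ℕ => Real.log n) atTop) 1
  have hlim := tendsto_one_sub_one_div_sqrt_log.mul
    (hlog.const_mul (j * ((k - j : ℕ) + 1) ^ 2 / ((k - j : ℕ) + 2) : ℝ))
  rw [mul_zero, mul_zero] at hlim
  refine hlim.congr' ?_
  filter_upwards [eventually_gt_atTop 0] with n hn
  exact (pjPrevMinus_div_birthScale hn).symm

theorem tendsto_pjPrevMinus_div_birthScale_mul (hj : 1 ≤ j) :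
    Tendsto (fun n : ℕ => pjPrevMinus k j n / birthScale (k - j) n * n) atTop atTop := by
  have hconst : (0 : ℝ) < j * ((k - j : ℕ) + 1) ^ 2 / ((k - j : ℕ) + 2) := by positivity
  refine (tendsto_one_sub_one_div_sqrt_log.pos_mul_atTop one_pos
    (tendsto_log_natCast.const_mul_atTop hconst)).congr' ?_
  filter_upwards [eventually_gt_atTop 0] with n hn
  rw [pjPrevMinus_div_birthScale hn]
  field_simp

theorem holdsWhp_exists_isMj_Icc (hj : 1 ≤ j) (hjk : j < k) {Δ : ℝ} (hΔ : 0 < Δ) :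
    HoldsWhp birthMeasure fun n t => ∃ K C J,
      ∀ p ∈ Set.Icc (pjPrevMinus k j n) (Δ * birthScale (k - j) n),
        IsMj (complexAt k n t p) k j K C J := by
  choose centre hcentre using fun n => exists_centre n (hjk.le.trans k.le_succ)
  have hmany := tendsto_pjPrevMinus_div_birthScale_mul (k := k) hj
  have hr : ∀ᶠ n in atTop, 0 ≤ pjPrevMinus k j n / birthScale (k - j) n ∧
      pjPrevMinus k j n / birthScale (k - j) n ≤ Δ := by
    filter_upwards [hmany.eventually_ge_atTop 0, eventually_gt_atTop 0,
      (tendsto_pjPrevMinus_div_birthScale k j).eventually_le_const hΔ] with n hn hn0 hle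
    exact ⟨nonneg_of_mul_nonneg_left hn (by exact_mod_cast hn0), hle⟩
  have hcard := holdsWhp_lt_card_isolatedSimplices (f := fun n => n ^ j) hjk hcentre hr
    (isBigO_const_log Δ) ?_ ?_
  · refine hcard.mono ?_
    filter_upwards [eventually_gt_atTop 0, hr] with n hn hr t ht
    have hscale := birthScale_pos (m := k - j) hn
    rw [div_mul_cancel₀ _ hscale.ne'] at ht
    refine exists_isMj_of_choose_lt_card_isolated hj hjk.le ((div_le_iff₀ hscale).1 hr.2)
      (centre := centre n) (fun K hK => ?_)
      (lt_of_le_of_lt (Nat.choose_le_pow n j) (by exact_mod_cast ht))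
    rw [isolatedSimplices, Finset.mem_filter, Finset.mem_powersetCard] at hK
    exact ⟨hcentre n K hK.1.2, hK.2⟩
  · filter_upwards [eventually_gt_atTop 0] with n hn
    exact one_le_pow₀ (by exact_mod_cast hn)
  · refine (hmany.atTop_mul_const (Real.exp_pos (-Δ))).congr' ?_
    filter_upwards [eventually_gt_atTop 0] with n hn
    rw [pow_succ (n : ℝ)]
    field_simp

theorem tendsto_exp_half_log_log :
    Tendsto (fun n : ℕ => Real.exp (1 / 2 * Real.log (Real.log n))) atTop atTop :=
  Real.tendsto_exp_atTop.comp (tendsto_log_log_natCast.const_mul_atTop one_half_pos)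

theorem holdsWhp_exists_isIsolated_early (hjk : j < k) {Δ : ℝ} (hΔ : 0 < Δ) :
    HoldsWhp birthMeasure fun n t => ∃ K C, IsFlowerBase k j K C ∧
      IsIsolated k t (Δ * birthScale (k - j) n)
        (criticalTime j (-(1 / 2)) n * birthScale (k - j) n) K C := by
  refine holdsWhp_exists_isIsolated (a := fun _ => Δ) hjk ?_ (isBigO_criticalTime _ _) ?_
  · filter_upwards [eventually_log_div_two_le_criticalTime j le_rfl,
      tendsto_log_natCast.eventually_ge_atTop (2 * Δ)] with n hle hlog
    exact ⟨hΔ.le, by linarith⟩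
  · refine (tendsto_exp_half_log_log.const_mul_atTop hΔ).congr' ?_
    filter_upwards [eventually_gt_atTop 0] with n hn
    rw [mul_assoc, pow_mul_exp_neg_criticalTime hn, neg_mul, neg_neg]

theorem holdsWhp_exists_isIsolated_late (hjk : j < k) :
    HoldsWhp birthMeasure fun n t => ∃ K C, IsFlowerBase k j K C ∧
      IsIsolated k t (criticalTime j (1 / 2) n * birthScale (k - j) n)
        (criticalTime j (1 / 2) n * birthScale (k - j) n) K C := by
  have hle := eventually_log_div_two_le_criticalTime j (show -(1 / 2 : ℝ) ≤ 1 / 2 by norm_num)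
  refine holdsWhp_exists_isIsolated hjk ?_ (isBigO_criticalTime _ _) ?_
  · filter_upwards [hle, tendsto_log_natCast.eventually_ge_atTop 0] with n hle hlog
    exact ⟨by linarith, le_rfl⟩
  · refine tendsto_atTop_mono' _ ?_ (tendsto_exp_half_log_log.const_mul_atTop one_half_pos)
    filter_upwards [eventually_gt_atTop 0, hle, tendsto_log_natCast.eventually_gt_atTop 0]
      with n hn hle hlog
    rw [mul_assoc, pow_mul_exp_neg_criticalTime hn]
    calc _ = Real.log n / 2 * Real.exp (-(1 / 2 * Real.log (Real.log n))) := by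
          rw [div_mul_eq_mul_div (Real.log n), mul_exp_neg_mul_log hlog]
          norm_num
          ring
      _ ≤ _ := by gcongr

theorem holdsWhp_birth_notMem_near_critical (hjk : j < k) :
    HoldsWhp birthMeasure fun n t => ∀ K C, IsFlowerBase k j K C →
      (∀ S ∈ rivals k K C, criticalTime j (1 / 2) n * birthScale (k - j) n < t S) →
      t K ∉ Set.Ioc (criticalTime j (-(1 / 2)) n * birthScale (k - j) n)
        (criticalTime j 2 n * birthScale (k - j) n) := by
  refine holdsWhp_forall_birth_notMem hjk ?_ ?_ (isBigO_criticalTime _ _) ?_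
  · filter_upwards [eventually_log_log_mem_Icc] with n ⟨hll, _⟩
    rw [criticalTime, criticalTime]
    linarith
  · filter_upwards [eventually_log_log_mem_Icc, eventually_log_div_two_le_criticalTime j
      (show -(1 / 2 : ℝ) ≤ 1 / 2 by norm_num)] with n ⟨hll, hl⟩ hle
    linarith
  · have hlim := ((Real.tendsto_pow_mul_exp_neg_atTop_nhds_zero 1).comp
      (tendsto_log_log_natCast.const_mul_atTop one_half_pos)).const_mul 5
    rw [mul_zero] at hlim
    refine hlim.congr' ?_
    filter_upwards [eventually_gt_atTop 0] with n hn
    rw [mul_assoc, pow_mul_exp_neg_criticalTime hn, criticalTime, criticalTime,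
      Function.comp_apply]
    ring

theorem holdsWhp_birth_notMem_after_critical (hjk : j < k) :
    HoldsWhp birthMeasure fun n t => ∀ K C, IsFlowerBase k j K C →
      (∀ S ∈ rivals k K C, criticalTime j 2 n * birthScale (k - j) n < t S) →
      t K ∉ Set.Ioc (criticalTime j 2 n * birthScale (k - j) n)
        ((k + 2) * Real.log n * birthScale (k - j) n) := by
  have hle : ∀ᶠ n : ℕ in atTop, 0 ≤ criticalTime j 2 n ∧
      criticalTime j 2 n ≤ (k + 2) * Real.log n := by
    have hkj : (j : ℝ) + 1 ≤ k := by exact_mod_cast hjk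
    filter_upwards [eventually_log_log_mem_Icc, eventually_log_div_two_le_criticalTime j
      (show -(1 / 2 : ℝ) ≤ 2 by norm_num)] with n ⟨hll, hl⟩ hle
    refine ⟨by linarith, ?_⟩
    have := mul_le_mul_of_nonneg_right hkj (hll.trans hl)
    rw [criticalTime]
    linarith
  refine holdsWhp_forall_birth_notMem hjk (hle.mono fun _ h => h.2) (hle.mono fun _ h => h.1)
    (isBigO_criticalTime _ _) ?_
  have hlim : Tendsto (fun n : ℕ => (k + 2) * Real.exp (-Real.log (Real.log n))) atTop
      (nhds 0) := by
    simpa using (Real.tendsto_exp_neg_atTop_nhds_zero.comp tendsto_log_log_natCast).const_mul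
      (k + 2 : ℝ)
  refine squeeze_zero' ?_ ?_ hlim
  · filter_upwards [hle] with n hn
    have := sub_nonneg.2 hn.2
    positivity
  · filter_upwards [hle, eventually_gt_atTop 0, tendsto_log_natCast.eventually_gt_atTop 0]
      with n hn hn0 hlog
    rw [mul_assoc, pow_mul_exp_neg_criticalTime hn0]
    calc _ ≤ (k + 2) * Real.log n * Real.exp (-(2 * Real.log (Real.log n))) := by
          gcongr
          linarith
      _ = _ := by
        rw [mul_assoc, mul_exp_neg_mul_log hlog]
        norm_num

theorem inv_birthScale_mul_pow_mul_exp_neg {n : ℕ} (hjk : j < k) (hn : 0 < n) :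
    (birthScale (k - j) n)⁻¹ * n ^ (j + 1) * Real.exp (-((k + 2) * Real.log n))
      = ((k - j : ℕ) + 1) / (k - j).factorial / n := by
  have hexp := pow_mul_exp_neg_mul_log hn (k + 2) 0
  push_cast at hexp
  rw [add_zero, neg_zero, Real.exp_zero] at hexp
  have hpow : (n : ℝ) ^ (k + 2) = n ^ (k - j) * n ^ (j + 1) * n := by
    rw [← pow_add, ← pow_succ]
    congr 1
    omega
  rw [hpow] at hexp
  rw [birthScale]
  field_simp
  linear_combination hexp

theorem holdsWhp_birth_notMem_late (hjk : j < k) :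
    HoldsWhp birthMeasure fun n t => ∀ K C, IsFlowerBase k j K C →
      (∀ S ∈ rivals k K C, (k + 2) * Real.log n * birthScale (k - j) n < t S) →
      t K ∉ Set.Ioc ((k + 2) * Real.log n * birthScale (k - j) n) 1 := by
  have hlog : (fun n : ℕ => (k + 2) * Real.log n) =O[atTop] fun n => Real.log n :=
    (isBigO_refl _ _).const_mul_left _
  have hle : ∀ᶠ n : ℕ in atTop, 0 ≤ (k + 2) * Real.log n ∧
      (k + 2) * Real.log n ≤ (birthScale (k - j) n)⁻¹ := by
    filter_upwards [eventually_gt_atTop 0,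
      (tendsto_pow_mul_birthScale hlog (by omega : 1 ≤ k - j) 1).eventually_le_const one_pos]
      with n hn hone
    rw [pow_one] at hone
    refine ⟨by positivity, ?_⟩
    rwa [← one_div, le_div_iff₀ (birthScale_pos hn)]
  have hbirth := holdsWhp_forall_birth_notMem (y := fun n => (birthScale (k - j) n)⁻¹) hjk
    (hle.mono fun _ h => h.2) (hle.mono fun _ h => h.1) hlog ?_
  · refine hbirth.mono ?_
    filter_upwards [eventually_gt_atTop 0] with n hn t ht
    rwa [inv_mul_cancel₀ (birthScale_pos hn).ne'] at ht
  have hlim := tendsto_const_div_atTop_nhds_zero_nat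
    (((k - j : ℕ) + 1) / (k - j).factorial : ℝ)
  refine squeeze_zero' ?_ ?_ hlim
  · filter_upwards [hle] with n hn
    have := sub_nonneg.2 hn.2
    positivity
  · filter_upwards [hle, eventually_gt_atTop 0] with n hn hn0
    have : 0 < birthScale (k - j) n := birthScale_pos hn0
    rw [← inv_birthScale_mul_pow_mul_exp_neg hjk hn0]
    gcongr
    linarith

theorem holdsWhp_le_of_isIsolated (hjk : j < k) :
    HoldsWhp birthMeasure fun n t => ∀ K C, IsFlowerBase k j K C →
      ∀ p ∈ Set.Icc (criticalTime j (1 / 2) n * birthScale (k - j) n) 1,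
        IsIsolated k t p p K C → t K ≤ criticalTime j (-(1 / 2)) n * birthScale (k - j) n := by
  refine ((holdsWhp_birth_notMem_near_critical hjk).and <|
    (holdsWhp_birth_notMem_after_critical hjk).and (holdsWhp_birth_notMem_late hjk)).mono ?_
  refine .of_forall fun n t ⟨hnear, hafter, hlate⟩ K C hKC p hp ⟨hKp, hrivals⟩ => ?_
  by_contra! hbirth
  have hsecond := not_le.1 fun h =>
    hnear K C hKC (fun S hS => hp.1.trans_lt (hrivals S hS)) ⟨hbirth, h⟩
  have hthird := not_le.1 fun h =>
    hafter K C hKC (fun S hS => (hsecond.trans_le hKp).trans (hrivals S hS)) ⟨hsecond, h⟩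
  exact hlate K C hKC (fun S hS => (hthird.trans_le hKp).trans (hrivals S hS))
    ⟨hthird, hKp.trans hp.2⟩

theorem eventually_criticalTime_order (hjk : j < k) (Δ : ℝ) : ∀ᶠ n : ℕ in atTop,
    Δ * birthScale (k - j) n ≤ criticalTime j (-(1 / 2)) n * birthScale (k - j) n ∧
    criticalTime j (-(1 / 2)) n * birthScale (k - j) n
      ≤ criticalTime j (1 / 2) n * birthScale (k - j) n ∧
    criticalTime j (1 / 2) n * birthScale (k - j) n ∈ Set.Icc (0 : ℝ) 1 := by
  filter_upwards [tendsto_log_natCast.eventually_ge_atTop (2 * Δ), eventually_log_log_mem_Icc,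
    eventually_log_div_two_le_criticalTime j le_rfl,
    (tendsto_pow_mul_birthScale (isBigO_criticalTime j (1 / 2))
      (by omega : 1 ≤ k - j) 1).eventually_le_const one_pos] with n hΔ ⟨hll, hl⟩ hle hone
  have hscale := birthScale_nonneg (m := k - j) (n := n)
  have horder : criticalTime j (-(1 / 2)) n ≤ criticalTime j (1 / 2) n := by
    rw [criticalTime, criticalTime]
    linarith
  refine ⟨by gcongr; linarith, by gcongr, mul_nonneg (by linarith) hscale, by simpa using hone⟩

theorem holdsWhp_exists_three_isMj (hj : 1 ≤ j) (hjk : j < k) :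
    HoldsWhp birthMeasure fun n t => ∃ K₁ C₁ J₁ K₂ C₂ J₂ K₃ C₃ J₃,
      ∀ p : ℝ, pjPrevMinus k j n ≤ p → p < pMj k j n t →
        (IsMj (complexAt k n t p) k j K₁ C₁ J₁ ∨
          IsMj (complexAt k n t p) k j K₂ C₂ J₂ ∨
          IsMj (complexAt k n t p) k j K₃ C₃ J₃) := by
  obtain ⟨Δ, hΔ, hshell⟩ := exists_holdsWhp_extendsToShells hjk
  refine ((holdsWhp_exists_isMj_Icc hj hjk hΔ).and <|
    (holdsWhp_exists_isIsolated_early hjk hΔ).and <| (holdsWhp_exists_isIsolated_late hjk).and <|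
    hshell.and (holdsWhp_le_of_isIsolated hjk)).mono ?_
  filter_upwards [eventually_criticalTime_order hjk Δ]
    with n ⟨hsq, hqq₂, hq₂⟩ t ⟨hfirst, hsecond, hlate, hshell, hborn⟩
  exact exists_three_isMj hj hjk.le hsq hqq₂ hq₂ hfirst hsecond hlate hshell hborn

end CriticalWindows

/-- Lemma 3.3: whp there exist three triples `(K_ℓ,C_ℓ,J_ℓ)`, `ℓ = 1,2,3`, such that for
every `p ∈ [p_{j-1}^-, p_{M_j})` one of them forms a copy of `M_j` in `G_p`; in particular
whp `H^j(G_p;F₂) ≠ 0` for all such `p` simultaneously. -/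
theorem statement5 (k j : ℕ) (hk : 2 ≤ k) (hj : 1 ≤ j) (hjk : j < k) :
    Tendsto (fun n : ℕ => birthMeasure n {t : Finset (Fin n) → ℝ |
      (∃ K₁ C₁ J₁ K₂ C₂ J₂ K₃ C₃ J₃,
        ∀ p : ℝ, pjPrevMinus k j n ≤ p → p < pMj k j n t →
          (IsMj (complexAt k n t p) k j K₁ C₁ J₁ ∨
            IsMj (complexAt k n t p) k j K₂ C₂ J₂ ∨
            IsMj (complexAt k n t p) k j K₃ C₃ J₃)) ∧
      ∀ p : ℝ, pjPrevMinus k j n ≤ p → p < pMj k j n t →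
        ¬ Subsingleton (cohomology (complexAt k n t p) j)})
      atTop (nhds 1) := by
  refine ((holdsWhp_exists_three_isMj hj hjk).mono ?_).tendsto_one
  refine .of_forall fun n t hcopies => ⟨hcopies, fun p hp hlt => ?_⟩
  obtain ⟨K₁, C₁, J₁, K₂, C₂, J₂, K₃, C₃, J₃, hcopies⟩ := hcopies
  have hpure (A) (hA : IsSimplex (complexAt k n t p) (j + 1) A) :
      ∃ K, IsSimplex (complexAt k n t p) k K ∧ A ⊆ K :=
    (hA.exists_superset (by omega)).imp fun _ hK => ⟨hK.1, hK.2.2⟩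
  rcases hcopies p hp hlt with hM | hM | hM <;>
    exact hM.not_subsingleton_cohomology isKComplex_complexAt hpure

end RSC
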